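/- arXiv:0810.0435 — 9 statements merged into one kernel-verified Lean document; each statement's English description precedes it below -/
import Mathlib

section
/- Let K be a field, R a K-module, and M_{pq} : R^{⊗p} ⊗ R^{⊗q} → R (p,q ≥ 0) a family of K-multilinear operations with M_{00} = 0, M_{10} = M_{01} = id_R, and M_{p0} = 0 = M_{0q} for p,q ≥ 2. Define a bilinear product * on the tensor module T(R) = ⊕_{n≥0} R^{⊗n} by: the element 1 ∈ R^{⊗0} is a two-sided unit, and for p,q ≥ 1, (x₁⊗…⊗x_p) * (y₁⊗…⊗y_q) = Σ_{k=1}^{p+q} Σ M_{i₁j₁}(x¹;y¹) ⊗ M_{i₂j₂}(x²;y²) ⊗ … ⊗ M_{i_kj_k}(x^k;y^k), where the inner sum runs over all pairs of sequences (i₁,…,i_k), (j₁,…,j_k) of nonnegative integers with i₁+…+i_k = p, j₁+…+j_k = q and i_t + j_t ≥ 1 for all t, and x^t denotes the consecutive block x_{i₁+…+i_{t−1}+1} ⊗ … ⊗ x_{i₁+…+i_t} (similarly y^t). Then * is associative if and only if for all i,j,k ≥ 1 the multibrace relation (R_{ijk}) holds: Σ_{l=1}^{i+j} Σ M_{lk}(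 M_{i₁j₁}(x¹;y¹) ⊗ … ⊗ M_{i_lj_l}(x^l;y^l) ; z₁⊗…⊗z_k ) = Σ_{m=1}^{j+k} Σ M_{im}( x₁⊗…⊗x_i ; M_{j₁k₁}(y¹;z¹) ⊗ … ⊗ M_{j_mk_m}(y^m;z^m) ) for all x₁,…,x_i, y₁,…,y_j, z₁,…,z_k ∈ R, where the left inner sum is over all sequences (i₁,…,i_l), (j₁,…,j_l) of nonnegative integers with i₁+…+i_l = i, j₁+…+j_l = j and i_t + j_t ≥ 1, and the right inner sum is over (j₁,…,j_m), (k₁,…,k_m) with j₁+…+j_m = j, k₁+…+k_m = k and j_t + k_t ≥ 1, blocks being consecutive as above. -/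
open Finset

/-- The set of pairs of sequences `(i₁,…,i_k)`, `(j₁,…,j_k)` of nonnegative integers with
`i₁+⋯+i_k = p`, `j₁+⋯+j_k = q` and `i_t + j_t ≥ 1` for all `t`, encoded as functions
`Fin k → ℕ × ℕ`. -/
def Comps (k p q : ℕ) : Finset (Fin k → ℕ × ℕ) :=
  (Fintype.piFinset fun _ : Fin k => Finset.range (p + 1) ×ˢ Finset.range (q + 1)).filter
    fun c => (∑ t, (c t).1) = p ∧ (∑ t, (c t).2) = q ∧ ∀ t, 1 ≤ (c t).1 + (c t).2

/-- Offset of the `t`-th consecutive block in the first family of variables. -/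
def off1 {k : ℕ} (c : Fin k → ℕ × ℕ) (t : Fin k) : ℕ :=
  ∑ u ∈ Finset.univ.filter (fun u => u < t), (c u).1

/-- Offset of the `t`-th consecutive block in the second family of variables. -/
def off2 {k : ℕ} (c : Fin k → ℕ × ℕ) (t : Fin k) : ℕ :=
  ∑ u ∈ Finset.univ.filter (fun u => u < t), (c u).2

section

variable (K : Type*) [Field K] (V : Type*) [AddCommGroup V] [Module K V]

/-- The tensor module `T(V) = ⊕_{n≥0} V^{⊗n}`. -/
abbrev TensorModule : Type _ := DirectSum ℕ fun n => TensorPower K n V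

/-- The pure tensor `x₁ ⊗ ⋯ ⊗ x_p` in `V^{⊗p} ⊆ T(V)` (from the first `p` entries of a
sequence `x : ℕ → V`). -/
noncomputable def el (p : ℕ) (x : ℕ → V) : TensorModule K V :=
  DirectSum.of (fun n => TensorPower K n V) p (PiTensorProduct.tprod K fun i : Fin p => x i.1)

/-- The unit `1 ∈ V^{⊗0} ⊆ T(V)`. -/
noncomputable def unitEl : TensorModule K V :=
  DirectSum.of (fun n => TensorPower K n V) 0 (PiTensorProduct.tprod K fun i : Fin 0 => i.elim0)

/-- `M_{i_t j_t}(x^t; y^t)`: the multilinear operation `M` applied to the `t`-th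
consecutive blocks of the sequences `x` and `y`, as prescribed by the composition `c`. -/
noncomputable def blockValM
    (M : ∀ p q : ℕ, MultilinearMap K (fun _ : Fin p => V)
      (MultilinearMap K (fun _ : Fin q => V) V))
    {k : ℕ} (c : Fin k → ℕ × ℕ) (x y : ℕ → V) (t : Fin k) : V :=
  M (c t).1 (c t).2 (fun s => x (off1 c t + s.1)) (fun s => y (off2 c t + s.1))

/-- The multibrace relation `(R_{ijk})`. -/
def RrelM
    (M : ∀ p q : ℕ, MultilinearMap K (fun _ : Fin p => V)
      (MultilinearMap K (fun _ : Fin q => V) V))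
    (i j k : ℕ) (x y z : ℕ → V) : Prop :=
  ∑ l ∈ Finset.Icc 1 (i + j), ∑ c ∈ Comps l i j,
      M l k (fun t : Fin l => blockValM K V M c x y t) (fun s : Fin k => z s.1)
    = ∑ m ∈ Finset.Icc 1 (j + k), ∑ c ∈ Comps m j k,
        M i m (fun s : Fin i => x s.1) (fun t : Fin m => blockValM K V M c y z t)

section Splits

variable {X A : Type*} [AddCommMonoid A]

/-- The sum of `F a b` over all splittings `xs = a ++ b`. -/
def splitSum (F : List X → List X → A) (xs : List X) : A :=
  ∑ i ∈ Finset.range (xs.length + 1), F (xs.take i) (xs.drop i)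

@[simp] lemma splitSum_nil (F : List X → List X → A) : splitSum F [] = F [] [] := by
  simp [splitSum]

lemma splitSum_cons (F : List X → List X → A) (x : X) (xs : List X) :
    splitSum F (x :: xs) = F [] (x :: xs) + splitSum (fun a b => F (x :: a) b) xs := by
  rw [splitSum, List.length_cons, Finset.sum_range_succ', add_comm]
  simp [splitSum]

lemma splitSum_congr {F G : List X → List X → A} {xs : List X}
    (h : ∀ a b, a ++ b = xs → F a b = G a b) : splitSum F xs = splitSum G xs :=
  Finset.sum_congr rfl fun _ _ => h _ _ (List.take_append_drop _ _)

lemma splitSum_add (F G : List X → List X → A) (xs : List X) :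
    splitSum (fun a b => F a b + G a b) xs = splitSum F xs + splitSum G xs :=
  Finset.sum_add_distrib

@[simp] lemma splitSum_zero (xs : List X) :
    splitSum (fun _ _ => (0 : A)) xs = 0 :=
  Finset.sum_const_zero

lemma splitSum_comm (F : List X → List X → List X → List X → A) (xs ys : List X) :
    splitSum (fun a b => splitSum (fun c d => F a b c d) ys) xs
      = splitSum (fun c d => splitSum (fun a b => F a b c d) xs) ys :=
  Finset.sum_comm

/-- Splitting a list in three: coassociativity of deconcatenation. -/
lemma splitSum_assoc (F : List X → List X → List X → A) (xs : List X) :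
    splitSum (fun a b => splitSum (fun c d => F a c d) b) xs
      = splitSum (fun e d => splitSum (fun a c => F a c d) e) xs := by
  induction xs generalizing F with
  | nil => simp
  | cons x xs ih => simp [splitSum_cons, splitSum_add, ih, add_assoc]

lemma splitSum_left_nil (F : List X → List X → A) (hF : ∀ x a b, F (x :: a) b = 0)
    (xs : List X) : splitSum F xs = F [] xs := by
  cases xs <;> simp [splitSum_cons, hF]

lemma splitSum_right_nil (F : List X → List X → A) (hF : ∀ a x b, F a (x :: b) = 0)
    (xs : List X) : splitSum F xs = F xs [] := by
  induction xs generalizing F with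
  | nil => simp
  | cons x xs ih => simp [splitSum_cons, hF, ih]

/-- The sum of `F a b c d` over all splittings `xs = a ++ b`, `ys = c ++ d`. -/
def splitSum₂ (F : List X → List X → List X → List X → A) (xs ys : List X) : A :=
  splitSum (fun a b => splitSum (fun c d => F a b c d) ys) xs

lemma splitSum₂_congr {F G : List X → List X → List X → List X → A} {xs ys : List X}
    (h : ∀ a b c d, a ++ b = xs → c ++ d = ys → F a b c d = G a b c d) :
    splitSum₂ F xs ys = splitSum₂ G xs ys :=
  splitSum_congr fun a b hab => splitSum_congr fun c d hcd => h a b c d hab hcd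

lemma splitSum₂_add (F G : List X → List X → List X → List X → A) (xs ys : List X) :
    splitSum₂ (fun a b c d => F a b c d + G a b c d) xs ys
      = splitSum₂ F xs ys + splitSum₂ G xs ys := by
  simp [splitSum₂, splitSum_add]

lemma splitSum₂_assoc (F : List X → List X → List X → List X → List X → List X → A)
    (xs ys : List X) :
    splitSum₂ (fun a b c d => splitSum₂ (fun a' b' c' d' => F a a' b' c c' d') b d) xs ys
      = splitSum₂ (fun e b f d => splitSum₂ (fun a a' c c' => F a a' b c c' d) e f) xs ys := by
  simp only [splitSum₂]
  calc _ = splitSum (fun a b => splitSum (fun a' b' => splitSum (fun c d =>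
              splitSum (fun c' d' => F a a' b' c c' d') d) ys) b) xs := by
        refine splitSum_congr fun a b _ => ?_
        rw [splitSum_comm]
    _ = splitSum (fun e b => splitSum (fun a a' => splitSum (fun f d =>
              splitSum (fun c c' => F a a' b c c' d) f) ys) e) xs := by
        rw [splitSum_assoc]
        simp only [splitSum_assoc]
    _ = _ := by
        refine splitSum_congr fun a b _ => ?_
        rw [splitSum_comm]

lemma splitSum₂_ite_left_nil (g : List X → List X → A) (xs ys : List X) :
    splitSum₂ (fun a b c d => if a = [] ∧ c = [] then g b d else 0) xs ys = g xs ys := by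
  rw [splitSum₂, splitSum_left_nil, splitSum_left_nil] <;> simp

lemma splitSum₂_ite_right_nil (g : List X → List X → A) (xs ys : List X) :
    splitSum₂ (fun a b c d => if b = [] ∧ d = [] then g a c else 0) xs ys = g xs ys := by
  rw [splitSum₂, splitSum_right_nil, splitSum_right_nil] <;> simp

end Splits

section Compositions

lemma mem_Comps {k p q : ℕ} {c : Fin k → ℕ × ℕ} :
    c ∈ Comps k p q ↔
      (∑ t, (c t).1) = p ∧ (∑ t, (c t).2) = q ∧ ∀ t, 1 ≤ (c t).1 + (c t).2 := by
  simp only [Comps, Finset.mem_filter, Fintype.mem_piFinset, Finset.mem_product,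
    Finset.mem_range, and_iff_right_iff_imp]
  rintro ⟨rfl, rfl, -⟩ t
  exact ⟨Nat.lt_succ_of_le (Finset.single_le_sum (f := fun t => (c t).1) (by simp) (by simp)),
    Nat.lt_succ_of_le (Finset.single_le_sum (f := fun t => (c t).2) (by simp) (by simp))⟩

lemma Comps_eq_empty {k p q : ℕ} (h : p + q < k) : Comps k p q = ∅ := by
  refine Finset.eq_empty_of_forall_notMem fun c hc => ?_
  obtain ⟨rfl, rfl, h1⟩ := mem_Comps.1 hc
  rw [← Finset.sum_add_distrib] at h
  have := Finset.card_nsmul_le_sum Finset.univ (fun t => (c t).1 + (c t).2) 1 fun t _ => h1 t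
  simp at this
  omega

lemma sum_Comps_zero {A : Type*} [AddCommMonoid A] (p q : ℕ) (g : (Fin 0 → ℕ × ℕ) → A) :
    ∑ c ∈ Comps 0 p q, g c = if p = 0 ∧ q = 0 then g Fin.elim0 else 0 := by
  have : Comps 0 p q = if p = 0 ∧ q = 0 then {Fin.elim0} else ∅ := by
    ext c
    rw [mem_Comps, Subsingleton.elim c Fin.elim0]
    split_ifs <;> simp <;> omega
  rw [this]
  split_ifs <;> simp

lemma sum_Comps_succ {A : Type*} [AddCommMonoid A] (k p q : ℕ)
    (g : (Fin (k + 1) → ℕ × ℕ) → A) :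
    ∑ c ∈ Comps (k + 1) p q, g c
      = ∑ i ∈ Finset.range (p + 1), ∑ j ∈ Finset.range (q + 1),
          if i = 0 ∧ j = 0 then 0
          else ∑ c ∈ Comps k (p - i) (q - j), g (Fin.cons (i, j) c) := by
  rw [← Finset.sum_product' (f := fun i j => if i = 0 ∧ j = 0 then 0
          else ∑ c ∈ Comps k (p - i) (q - j), g (Fin.cons (i, j) c))]
  simp_rw [← ite_not (_ ∧ _)]
  rw [← Finset.sum_filter, Finset.sum_sigma']
  refine Finset.sum_bij' (fun c _ => ⟨c 0, Fin.tail c⟩) (fun s _ => Fin.cons s.1 s.2) ?_ ?_ ?_ ?_ ?_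
  · intro c hc
    obtain ⟨h1, h2, h3⟩ := mem_Comps.1 hc
    rw [Fin.sum_univ_succ] at h1 h2
    have := h3 0
    simp only [Finset.mem_sigma, Finset.mem_filter, Finset.mem_product, Finset.mem_range,
      mem_Comps, Fin.tail]
    refine ⟨⟨⟨?_, ?_⟩, ?_⟩, ?_, ?_, fun t => h3 _⟩ <;> omega
  · rintro ⟨⟨i, j⟩, c⟩ hc
    simp only [Finset.mem_sigma, Finset.mem_filter, Finset.mem_product, Finset.mem_range,
      mem_Comps] at hc
    obtain ⟨⟨⟨h1, h2⟩, h3⟩, h4, h5, h6⟩ := hc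
    simp only [mem_Comps, Fin.sum_univ_succ, Fin.cons_zero, Fin.cons_succ, Fin.forall_fin_succ]
    refine ⟨?_, ?_, ?_, h6⟩ <;> omega
  · intro c _
    exact Fin.cons_self_tail c
  · rintro ⟨⟨i, j⟩, c⟩ _
    simp
  · intro c _
    simp

lemma off1_zero {k : ℕ} (c : Fin (k + 1) → ℕ × ℕ) : off1 c 0 = 0 := by simp [off1]

lemma off2_zero {k : ℕ} (c : Fin (k + 1) → ℕ × ℕ) : off2 c 0 = 0 := by simp [off2]

lemma off1_cons_succ {k : ℕ} (a : ℕ × ℕ) (c : Fin k → ℕ × ℕ) (t : Fin k) :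
    off1 (Fin.cons a c : Fin (k + 1) → ℕ × ℕ) t.succ = a.1 + off1 c t := by
  simp [off1, Finset.sum_filter, Fin.sum_univ_succ]

lemma off2_cons_succ {k : ℕ} (a : ℕ × ℕ) (c : Fin k → ℕ × ℕ) (t : Fin k) :
    off2 (Fin.cons a c : Fin (k + 1) → ℕ × ℕ) t.succ = a.2 + off2 c t := by
  simp [off2, Finset.sum_filter, Fin.sum_univ_succ]

lemma off1_add_le {k : ℕ} (c : Fin k → ℕ × ℕ) (t : Fin k) :
    off1 c t + (c t).1 ≤ ∑ u, (c u).1 := by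
  rw [off1, add_comm, ← Finset.sum_insert (f := fun u => (c u).1) (by simp)]
  exact Finset.sum_le_sum_of_subset (Finset.subset_univ _)

lemma off2_add_le {k : ℕ} (c : Fin k → ℕ × ℕ) (t : Fin k) :
    off2 c t + (c t).2 ≤ ∑ u, (c u).2 := by
  rw [off2, add_comm, ← Finset.sum_insert (f := fun u => (c u).2) (by simp)]
  exact Finset.sum_le_sum_of_subset (Finset.subset_univ _)

end Compositions

section BlockSums

variable {K V} {A B : Type*} [AddCommMonoid A] [AddCommMonoid B]
  (M : ∀ p q : ℕ, MultilinearMap K (fun _ : Fin p => V)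
    (MultilinearMap K (fun _ : Fin q => V) V))

/-- The operations `M_{pq}` as a single operation on pairs of lists. -/
noncomputable def listOp (xs ys : List V) : V :=
  M xs.length ys.length (fun s => xs.getD s 0) (fun s => ys.getD s 0)

lemma listOp_eq {p q : ℕ} {xs ys : List V} (hp : xs.length = p) (hq : ys.length = q) :
    listOp M xs ys = M p q (fun s => xs.getD s 0) (fun s => ys.getD s 0) := by
  subst hp hq
  rfl

lemma listOp_ofFn {p q : ℕ} (x : Fin p → V) (y : Fin q → V) :
    listOp M (List.ofFn x) (List.ofFn y) = M p q x y := by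
  rw [listOp_eq M (List.length_ofFn (f := x)) (List.length_ofFn (f := y))]
  simp

lemma listOp_eq_zero_left {xs : List V} (h : (0 : V) ∈ xs) (ys : List V) :
    listOp M xs ys = 0 := by
  obtain ⟨i, hi, h0⟩ := List.mem_iff_getElem.1 h
  rw [listOp, (M _ _).map_coord_zero ⟨i, hi⟩ (by simp [hi, h0])]
  rfl

lemma listOp_eq_zero_right (xs : List V) {ys : List V} (h : (0 : V) ∈ ys) :
    listOp M xs ys = 0 := by
  obtain ⟨i, hi, h0⟩ := List.mem_iff_getElem.1 h
  rw [listOp, (M _ _ _).map_coord_zero ⟨i, hi⟩ (by simp [hi, h0])]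

/-- The sum of `F w` over all words `w = M_{i₁j₁}(x¹;y¹) ⋯ M_{i_kj_k}(x^k;y^k)` obtained by cutting
`xs` and `ys` into consecutive blocks. -/
noncomputable def blockSum (F : List V → A) (xs ys : List V) : A :=
  ∑ k ∈ Finset.range (xs.length + ys.length + 1), ∑ c ∈ Comps k xs.length ys.length,
    F (List.ofFn (blockValM K V M c (fun n => xs.getD n 0) (fun n => ys.getD n 0)))

lemma blockSum_eq_sum_range (F : List V → A) {xs ys : List V} {N : ℕ}
    (hN : xs.length + ys.length < N) :
    blockSum M F xs ys = ∑ k ∈ Finset.range N, ∑ c ∈ Comps k xs.length ys.length,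
      F (List.ofFn (blockValM K V M c (fun n => xs.getD n 0) (fun n => ys.getD n 0))) := by
  refine Finset.sum_subset (Finset.range_subset_range.2 hN) fun k _ hk => ?_
  rw [Comps_eq_empty (by simpa using hk), Finset.sum_empty]

lemma ofFn_blockValM_cons {k : ℕ} (i j : ℕ) (c : Fin k → ℕ × ℕ) (x y : ℕ → V) :
    List.ofFn (blockValM K V M (Fin.cons (i, j) c : Fin (k + 1) → ℕ × ℕ) x y)
      = M i j (fun s => x s) (fun s => y s)
        :: List.ofFn (blockValM K V M c (fun n => x (i + n)) (fun n => y (j + n))) := by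
  rw [List.ofFn_succ]
  congr 1
  · simp only [blockValM, off1_zero, off2_zero, zero_add]
    rfl
  · simp only [blockValM, off1_cons_succ, off2_cons_succ, add_assoc]
    rfl

/-- The recursion for `blockSum` obtained by singling out the first pair of blocks. -/
lemma blockSum_eq (F : List V → A) (xs ys : List V) :
    blockSum M F xs ys = (if xs = [] ∧ ys = [] then F [] else 0)
      + splitSum₂ (fun a b c d => if a = [] ∧ c = [] then 0
          else blockSum M (fun w => F (listOp M a c :: w)) b d) xs ys := by
  rw [blockSum_eq_sum_range M F (Nat.lt_succ_of_lt (Nat.lt_succ_self _)), Finset.sum_range_succ',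
    sum_Comps_zero, add_comm]
  simp_rw [sum_Comps_succ]
  rw [Finset.sum_comm]
  congr 1
  · simp
  refine Finset.sum_congr rfl fun i hi => ?_
  rw [Finset.sum_comm]
  refine Finset.sum_congr rfl fun j hj => ?_
  rw [Finset.mem_range, Nat.lt_succ_iff] at hi hj
  have hx : xs.take i = [] ↔ i = 0 := by
    rw [← List.length_eq_zero_iff, List.length_take, min_eq_left hi]
  have hy : ys.take j = [] ↔ j = 0 := by
    rw [← List.length_eq_zero_iff, List.length_take, min_eq_left hj]
  simp only [hx, hy]
  split_ifs with h
  · simp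
  rw [blockSum_eq_sum_range (N := xs.length + ys.length + 1) _ _ (by simp; omega)]
  refine Finset.sum_congr rfl fun k _ => ?_
  simp only [List.length_drop]
  refine Finset.sum_congr rfl fun c _ => ?_
  rw [ofFn_blockValM_cons, listOp_eq M (List.length_take_of_le hi) (List.length_take_of_le hj)]
  have hx' : (fun s : Fin i => (xs.take i).getD s 0) = fun s : Fin i => xs.getD s 0 := by
    ext s
    simp
  have hy' : (fun s : Fin j => (ys.take j).getD s 0) = fun s : Fin j => ys.getD s 0 := by
    ext s
    simp
  rw [hx', hy']
  simp [List.getD_eq_getElem?_getD]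

lemma map_blockSum (φ : A →+ B) (F : List V → A) (xs ys : List V) :
    φ (blockSum M F xs ys) = blockSum M (fun w => φ (F w)) xs ys := by
  simp [blockSum, map_sum]

lemma blockSum_add (F G : List V → A) (xs ys : List V) :
    blockSum M (fun w => F w + G w) xs ys = blockSum M F xs ys + blockSum M G xs ys := by
  simp [blockSum, Finset.sum_add_distrib]

@[simp] lemma blockSum_zero (xs ys : List V) : blockSum M (fun _ => (0 : A)) xs ys = 0 := by
  simp [blockSum]

lemma blockSum_splitSum_comm (F : List V → List V → List V → A) (xs ys zs : List V) :
    blockSum M (fun w => splitSum (F w) zs) xs ys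
      = splitSum (fun a b => blockSum M (fun w => F w a b) xs ys) zs := by
  simp only [blockSum, splitSum]
  rw [Finset.sum_comm]
  refine Finset.sum_congr rfl fun k _ => ?_
  rw [Finset.sum_comm]

@[simp] lemma blockSum_nil_nil (F : List V → A) : blockSum M F [] [] = F [] := by
  simp [blockSum_eq M F [] [], splitSum₂]

/-- A sum over words supported at the empty word. -/
lemma blockSum_of_cons_eq_zero {F : List V → A} (hF : ∀ v w, F (v :: w) = 0) (xs ys : List V) :
    blockSum M F xs ys = if xs = [] ∧ ys = [] then F [] else 0 := by
  rw [blockSum_eq]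
  simp [hF, splitSum₂]

/-- A sum over words supported at words of length one. -/
lemma blockSum_of_length_one {F : List V → A} (h00 : listOp M [] [] = 0) (f : V →+ A)
    (h0 : F [] = 0) (h1 : ∀ v, F [v] = f v) (h2 : ∀ u v w, F (u :: v :: w) = 0) (xs ys : List V) :
    blockSum M F xs ys = f (listOp M xs ys) := by
  rw [blockSum_eq, h0, ite_self, zero_add,
    ← splitSum₂_ite_right_nil (fun a c => f (listOp M a c)) xs ys]
  refine splitSum₂_congr fun a b c d _ _ => ?_
  rw [blockSum_of_cons_eq_zero M (fun v w => h2 _ v w), h1]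
  by_cases h : a = [] ∧ c = []
  · obtain ⟨rfl, rfl⟩ := h
    simp [h00]
  · simp [h]

/-- Words arising from cutting are compatible with deconcatenation. -/
lemma blockSum_splitSum (G : List V → List V → A) (xs ys : List V) :
    blockSum M (splitSum G) xs ys
      = splitSum₂ (fun a b c d => blockSum M (fun w => blockSum M (G w) b d) a c) xs ys := by
  induction hn : xs.length + ys.length using Nat.strong_induction_on generalizing xs ys G with
  | _ n ih =>
  subst hn
  have key : splitSum₂ (fun a b c d => if a = [] ∧ c = [] then 0
        else blockSum M (splitSum fun w => G (listOp M a c :: w)) b d) xs ys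
      = splitSum₂ (fun e b f d => splitSum₂ (fun a a' c c' => if a = [] ∧ c = [] then 0 else
          blockSum M (fun w => blockSum M (G (listOp M a c :: w)) b d) a' c') e f) xs ys := by
    rw [← splitSum₂_assoc (fun a a' b c c' d => if a = [] ∧ c = [] then 0 else
          blockSum M (fun w => blockSum M (G (listOp M a c :: w)) b d) a' c')]
    refine splitSum₂_congr fun a b c d hab hcd => ?_
    split_ifs with h
    · simp [splitSum₂]
    · refine ih _ ?_ _ _ _ rfl
      rw [← hab, ← hcd]
      simp only [List.length_append]
      simp only [← List.length_eq_zero_iff] at h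
      omega
  have hR : splitSum₂ (fun a b c d => blockSum M (fun w => blockSum M (G w) b d) a c) xs ys
      = blockSum M (G []) xs ys + splitSum₂ (fun e b f d => splitSum₂ (fun a a' c c' =>
          if a = [] ∧ c = [] then 0 else
          blockSum M (fun w => blockSum M (G (listOp M a c :: w)) b d) a' c') e f) xs ys := by
    rw [← splitSum₂_ite_left_nil (fun b d => blockSum M (G []) b d) xs ys, ← splitSum₂_add]
    exact splitSum₂_congr fun a b c d _ _ => blockSum_eq M _ _ _
  rw [hR, ← key, blockSum_eq, blockSum_eq M (G []), add_assoc, ← splitSum₂_add, splitSum_nil]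
  congr 1
  refine splitSum₂_congr fun a b c d _ _ => ?_
  split_ifs
  · simp
  · rw [← blockSum_add]
    simp only [splitSum_cons]

lemma blockSum_nil_right (h1 : ∀ v, listOp M [v] [] = v)
    (h2 : ∀ u v w, listOp M (u :: v :: w) [] = 0)
    {F : List V → A} (hF : ∀ w, (0 : V) ∈ w → F w = 0) (xs : List V) :
    blockSum M F xs [] = F xs := by
  induction xs generalizing F with
  | nil => simp
  | cons x xs ih =>
    rw [blockSum_eq]
    simp only [splitSum₂, splitSum_nil, splitSum_cons, and_true, if_true, zero_add,
      reduceCtorEq, if_false]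
    rw [splitSum_left_nil _ (fun u a b => by simp [h2, hF]), h1,
      ih fun w hw => hF _ (List.mem_cons_of_mem _ hw)]

lemma blockSum_nil_left (h1 : ∀ v, listOp M [] [v] = v)
    (h2 : ∀ u v w, listOp M [] (u :: v :: w) = 0)
    {F : List V → A} (hF : ∀ w, (0 : V) ∈ w → F w = 0) (ys : List V) :
    blockSum M F [] ys = F ys := by
  induction ys generalizing F with
  | nil => simp
  | cons y ys ih =>
    rw [blockSum_eq]
    simp only [splitSum₂, splitSum_nil, splitSum_cons, true_and, if_true, zero_add,
      reduceCtorEq, if_false]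
    rw [splitSum_left_nil _ (fun u a b => by simp [h2, hF]), h1,
      ih fun w hw => hF _ (List.mem_cons_of_mem _ hw)]

section Associativity

variable {T : Type*} [Semiring T] (ι : V →+ T)

/-- The product of words `xs * ys`, with letters interpreted through `ι`. -/
noncomputable def wordMul (xs ys : List V) : T :=
  blockSum M (fun w => (w.map ι).prod) xs ys

lemma wordMul_eq (h00 : listOp M [] [] = 0) (xs ys : List V) :
    wordMul M ι xs ys = (if xs = [] ∧ ys = [] then 1 else 0)
      + splitSum (fun a b => splitSum (fun c d => ι (listOp M a c) * wordMul M ι b d) ys) xs := by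
  rw [wordMul, blockSum_eq, List.map_nil, List.prod_nil]
  congr 1
  refine splitSum₂_congr fun a b c d _ _ => ?_
  split_ifs with h
  · rw [h.1, h.2, h00, map_zero, zero_mul]
  · simp only [List.map_cons, List.prod_cons]
    exact (map_blockSum M (AddMonoidHom.mulLeft (ι (listOp M a c))) _ _ _).symm

/-- The corestriction to letters of `(xs * ys) * zs`. -/
noncomputable def leftBrace (xs ys zs : List V) : V :=
  blockSum M (fun w => listOp M w zs) xs ys

/-- The corestriction to letters of `xs * (ys * zs)`. -/
noncomputable def rightBrace (xs ys zs : List V) : V :=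
  blockSum M (fun w => listOp M xs w) ys zs

lemma blockSum_mul_blockSum (f : List V → V) (g : List V → T) (xs ys xs' ys' : List V) :
    blockSum M (fun w => blockSum M (fun w' => ι (f w) * g w') xs' ys') xs ys
      = ι (blockSum M f xs ys) * blockSum M g xs' ys' := by
  have h (v : V) : blockSum M (fun w' => ι v * g w') xs' ys' = ι v * blockSum M g xs' ys' :=
    (map_blockSum M (AddMonoidHom.mulLeft (ι v)) _ _ _).symm
  simp only [h]
  exact (map_blockSum M ((AddMonoidHom.mulRight (blockSum M g xs' ys')).comp ι) _ _ _).symm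

lemma leftAssoc_eq (h00 : listOp M [] [] = 0) (xs ys zs : List V) :
    blockSum M (fun w => wordMul M ι w zs) xs ys
      = (if xs = [] ∧ ys = [] ∧ zs = [] then 1 else 0)
        + splitSum (fun e f => splitSum₂ (fun a b c d => ι (leftBrace M a c e)
            * blockSum M (fun w => wordMul M ι w f) b d) xs ys) zs := by
  have hmul (w : List V) : wordMul M ι w zs = (if w = [] ∧ zs = [] then 1 else 0)
      + splitSum (fun e f => splitSum (fun a b => ι (listOp M a e) * wordMul M ι b f) w) zs := by
    rw [wordMul_eq M ι h00, splitSum_comm]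
  simp only [hmul]
  rw [blockSum_add, blockSum_of_cons_eq_zero _ (by simp)]
  congr 1
  · simp [← ite_and, and_assoc]
  rw [blockSum_splitSum_comm]
  refine splitSum_congr fun e f _ => ?_
  rw [blockSum_splitSum]
  simp only [blockSum_mul_blockSum]
  rfl

lemma rightAssoc_eq (h00 : listOp M [] [] = 0) (xs ys zs : List V) :
    blockSum M (fun w => wordMul M ι xs w) ys zs
      = (if xs = [] ∧ ys = [] ∧ zs = [] then 1 else 0)
        + splitSum (fun e f => splitSum₂ (fun a b c d => ι (rightBrace M a c e)
            * blockSum M (fun w => wordMul M ι b w) d f) xs ys) zs := by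
  simp only [wordMul_eq M ι h00 xs]
  rw [blockSum_add, blockSum_of_cons_eq_zero _ (by simp)]
  congr 1
  · simp [← ite_and, and_comm]
  rw [blockSum_splitSum_comm]
  simp only [splitSum₂]
  rw [splitSum_comm _ zs xs]
  refine splitSum_congr fun a b _ => ?_
  rw [blockSum_splitSum, splitSum_comm _ zs ys]
  simp only [blockSum_mul_blockSum]
  rfl

/-- Equality of the corestrictions to letters forces associativity on words. -/
lemma leftAssoc_eq_rightAssoc (h00 : listOp M [] [] = 0)
    (h : ∀ xs ys zs, leftBrace M xs ys zs = rightBrace M xs ys zs) (xs ys zs : List V) :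
    blockSum M (fun w => wordMul M ι w zs) xs ys = blockSum M (fun w => wordMul M ι xs w) ys zs := by
  induction hn : xs.length + ys.length + zs.length using Nat.strong_induction_on
    generalizing xs ys zs with
  | _ n ih =>
  subst hn
  rw [leftAssoc_eq M ι h00, rightAssoc_eq M ι h00]
  refine congrArg₂ (· + ·) rfl ?_
  refine splitSum_congr fun e f hef => splitSum₂_congr fun a b c d hab hcd => ?_
  rw [h a c e]
  by_cases hnil : a = [] ∧ c = [] ∧ e = []
  · obtain ⟨rfl, rfl, rfl⟩ := hnil
    simp [rightBrace, h00]
  · congr 1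
    refine ih _ ?_ _ _ _ rfl
    rw [← hab, ← hcd, ← hef]
    simp only [List.length_append]
    simp only [← List.length_eq_zero_iff] at hnil
    omega

end Associativity

/-- The boundary conditions imply the multibrace relations with an empty argument. -/
lemma leftBrace_eq_rightBrace_of_nil (h00 : listOp M [] [] = 0)
    (hl1 : ∀ v, listOp M [v] [] = v) (hl2 : ∀ u v w, listOp M (u :: v :: w) [] = 0)
    (hr1 : ∀ v, listOp M [] [v] = v) (hr2 : ∀ u v w, listOp M [] (u :: v :: w) = 0)
    {xs ys zs : List V} (h : xs = [] ∨ ys = [] ∨ zs = []) :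
    leftBrace M xs ys zs = rightBrace M xs ys zs := by
  unfold leftBrace rightBrace
  rcases h with rfl | rfl | rfl
  · rw [blockSum_nil_left M hr1 hr2 fun w hw => listOp_eq_zero_left M hw zs,
      blockSum_of_length_one M h00 (AddMonoidHom.id V) h00 hr1 hr2]
    rfl
  · rw [blockSum_nil_right M hl1 hl2 fun w hw => listOp_eq_zero_left M hw zs,
      blockSum_nil_left M hr1 hr2 fun w hw => listOp_eq_zero_right M xs hw]
  · rw [blockSum_nil_right M hl1 hl2 fun w hw => listOp_eq_zero_right M xs hw,
      blockSum_of_length_one (F := fun w => listOp M w []) M h00 (AddMonoidHom.id V) h00 hl1 hl2]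
    rfl

lemma blockValM_congr {k p q : ℕ} {c : Fin k → ℕ × ℕ} (hc : c ∈ Comps k p q) {x x' y y' : ℕ → V}
    (hx : ∀ n < p, x n = x' n) (hy : ∀ n < q, y n = y' n) :
    blockValM K V M c x y = blockValM K V M c x' y' := by
  obtain ⟨rfl, rfl, -⟩ := mem_Comps.1 hc
  funext t
  unfold blockValM
  congr 2
  · funext s
    exact hx _ (by have := off1_add_le c t; omega)
  · funext s
    exact hy _ (by have := off2_add_le c t; omega)

/-- `blockSum` as the double sum over compositions. -/
lemma blockSum_ofFn (F : List V → A) {p q : ℕ} (hp : 1 ≤ p) (x y : ℕ → V) :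
    blockSum M F (List.ofFn fun s : Fin p => x s) (List.ofFn fun s : Fin q => y s)
      = ∑ k ∈ Finset.Icc 1 (p + q), ∑ c ∈ Comps k p q,
          F (List.ofFn fun t => blockValM K V M c x y t) := by
  have hI : Finset.Icc 1 (p + q) = Finset.Ico (0 + 1) (p + q + 1) := by
    ext
    simp
  rw [blockSum, List.length_ofFn, List.length_ofFn, Finset.range_eq_Ico,
    Finset.sum_eq_sum_Ico_succ_bot (by omega), sum_Comps_zero, if_neg (by omega), zero_add, ← hI]
  refine Finset.sum_congr rfl fun k _ => Finset.sum_congr rfl fun c hc => ?_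
  rw [blockValM_congr M hc (x' := x) (y' := y)]
  · intro n hn
    simp [hn]
  · intro n hn
    simp [hn]

lemma RrelM_iff {i j k : ℕ} (hi : 1 ≤ i) (hj : 1 ≤ j) (x y z : ℕ → V) :
    RrelM K V M i j k x y z ↔
      leftBrace M (List.ofFn fun s : Fin i => x s) (List.ofFn fun s : Fin j => y s)
          (List.ofFn fun s : Fin k => z s)
        = rightBrace M (List.ofFn fun s : Fin i => x s) (List.ofFn fun s : Fin j => y s)
          (List.ofFn fun s : Fin k => z s) := by
  rw [leftBrace, rightBrace, blockSum_ofFn M _ hi, blockSum_ofFn M _ hj]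
  simp only [listOp_ofFn]
  rfl

end BlockSums

section Words

variable {K V}

variable (K) in
/-- The word `x₁ ⊗ ⋯ ⊗ x_p` in the tensor module. -/
noncomputable def word (w : List V) : TensorModule K V :=
  TensorAlgebra.toDirectSum (w.map (TensorAlgebra.ι K)).prod

lemma word_ofFn {n : ℕ} (x : Fin n → V) :
    word K (List.ofFn x)
      = DirectSum.of (fun n => TensorPower K n V) n (PiTensorProduct.tprod K x) := by
  rw [word, List.map_ofFn, ← TensorAlgebra.toDirectSum_tensorPower_tprod]
  rfl

lemma el_eq_word (p : ℕ) (x : ℕ → V) : el K V p x = word K (List.ofFn fun s : Fin p => x s) :=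
  (word_ofFn _).symm

lemma unitEl_eq_word : unitEl K V = word K [] :=
  (word_ofFn fun i : Fin 0 => i.elim0).symm

lemma word_eq_zero {w : List V} (h : (0 : V) ∈ w) : word K w = 0 := by
  rw [word, List.prod_eq_zero (List.mem_map.2 ⟨0, h, map_zero _⟩), map_zero]

lemma exists_ofFn_eq (w : List V) : ∃ x : ℕ → V, List.ofFn (fun s : Fin w.length => x s) = w :=
  ⟨fun n => w.getD n 0, by simp⟩

lemma tensorModule_induction {P : TensorModule K V → Prop} (hzero : P 0)
    (hword : ∀ w, P (word K w)) (hadd : ∀ a b, P a → P b → P (a + b))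
    (hsmul : ∀ (r : K) a, P a → P (r • a)) (a : TensorModule K V) : P a := by
  induction a using DirectSum.induction_on with
  | zero => exact hzero
  | of n t =>
    induction t using PiTensorProduct.induction_on with
    | smul_tprod r x =>
      rw [← DirectSum.lof_eq_of K, map_smul, DirectSum.lof_eq_of, ← word_ofFn]
      exact hsmul _ _ (hword _)
    | add s t hs ht =>
      rw [map_add]
      exact hadd _ _ hs ht
  | add a b ha hb => exact hadd a b ha hb

variable (K V) in
/-- The projection of the tensor module onto its component `V^{⊗1} = V`. -/
noncomputable def toLetter : TensorModule K V →ₗ[K] V :=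
  (PiTensorProduct.subsingletonEquiv (R := K) (s := fun _ : Fin 1 => V) 0).toLinearMap ∘ₗ
    DirectSum.component K ℕ (fun n => TensorPower K n V) 1

lemma toLetter_singleton (v : V) : toLetter K V (word K [v]) = v := by
  have := word_ofFn (K := K) fun _ : Fin 1 => v
  rw [List.ofFn_succ, List.ofFn_zero] at this
  rw [this]
  simp [toLetter, ← DirectSum.lof_eq_of K, DirectSum.component.lof_self,
    PiTensorProduct.subsingletonEquiv_apply_tprod]

lemma toLetter_of_length_ne {w : List V} (h : w.length ≠ 1) : toLetter K V (word K w) = 0 := by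
  have := word_ofFn (K := K) w.get
  rw [List.ofFn_get] at this
  rw [this]
  rw [toLetter, LinearMap.comp_apply, ← DirectSum.lof_eq_of K, DirectSum.component.of,
    dif_neg h, map_zero]

lemma map_blockSum_word (φ : TensorModule K V →ₗ[K] TensorModule K V)
    (M : ∀ p q : ℕ, MultilinearMap K (fun _ : Fin p => V)
      (MultilinearMap K (fun _ : Fin q => V) V)) (xs ys : List V) :
    φ (blockSum M (word K) xs ys) = blockSum M (fun w => φ (word K w)) xs ys :=
  map_blockSum M φ.toAddMonoidHom _ _ _

lemma toLetter_blockSum_word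
    (M : ∀ p q : ℕ, MultilinearMap K (fun _ : Fin p => V)
      (MultilinearMap K (fun _ : Fin q => V) V)) (h00 : listOp M [] [] = 0) (xs ys : List V) :
    toLetter K V (blockSum M (word K) xs ys) = listOp M xs ys :=
  (map_blockSum M (toLetter K V).toAddMonoidHom _ _ _).trans <|
    blockSum_of_length_one M h00 (AddMonoidHom.id V) (toLetter_of_length_ne (by simp))
      toLetter_singleton (fun _ _ _ => toLetter_of_length_ne (by simp)) xs ys

lemma blockSum_word_eq
    (M : ∀ p q : ℕ, MultilinearMap K (fun _ : Fin p => V)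
      (MultilinearMap K (fun _ : Fin q => V) V)) (xs ys : List V) :
    blockSum M (word K) xs ys
      = TensorAlgebra.toDirectSum
          (wordMul M (TensorAlgebra.ι K : V →ₗ[K] TensorAlgebra K V).toAddMonoidHom xs ys) :=
  (map_blockSum M (TensorAlgebra.toDirectSum (R := K) (M := V)).toLinearMap.toAddMonoidHom
    _ _ _).symm

end Words

/-- Let `M_{pq}` be multilinear operations on `V` with `M₀₀ = 0`,
`M₁₀ = M₀₁ = id`, `M_{p0} = 0 = M_{0q}` for `p, q ≥ 2`, and let `*` be the bilinear
product on the tensor module `T(V)` with unit `1 ∈ V^{⊗0}` given on pure tensors by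
`(x₁⊗⋯⊗x_p) * (y₁⊗⋯⊗y_q) = Σ_{k=1}^{p+q} Σ_{(i,j)} M_{i₁j₁}(x¹;y¹) ⊗ ⋯ ⊗ M_{i_kj_k}(x^k;y^k)`.
Then `*` is associative if and only if the multibrace relations `(R_{ijk})` hold for all
`i, j, k ≥ 1`. -/
theorem associative_iff_multibrace
    (M : ∀ p q : ℕ, MultilinearMap K (fun _ : Fin p => V)
      (MultilinearMap K (fun _ : Fin q => V) V))
    (hM00 : M 0 0 = 0)
    (hM10 : ∀ (x : Fin 1 → V) (y : Fin 0 → V), M 1 0 x y = x 0)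
    (hM01 : ∀ (x : Fin 0 → V) (y : Fin 1 → V), M 0 1 x y = y 0)
    (hMp0 : ∀ p, 2 ≤ p → M p 0 = 0)
    (hM0q : ∀ q, 2 ≤ q → M 0 q = 0)
    (star : TensorModule K V →ₗ[K] TensorModule K V →ₗ[K] TensorModule K V)
    (hunit_left : ∀ a : TensorModule K V, star (unitEl K V) a = a)
    (hunit_right : ∀ a : TensorModule K V, star a (unitEl K V) = a)
    (hform : ∀ p q : ℕ, 1 ≤ p → 1 ≤ q → ∀ x y : ℕ → V,
      star (el K V p x) (el K V q y)
        = ∑ k ∈ Finset.Icc 1 (p + q), ∑ c ∈ Comps k p q,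
            DirectSum.of (fun n => TensorPower K n V) k
              (PiTensorProduct.tprod K fun t : Fin k => blockValM K V M c x y t)) :
    (∀ a b c : TensorModule K V, star (star a b) c = star a (star b c))
    ↔ (∀ i j k : ℕ, 1 ≤ i → 1 ≤ j → 1 ≤ k → ∀ x y z : ℕ → V, RrelM K V M i j k x y z) := by
  have h00 : listOp M [] [] = 0 := by simp [listOp, hM00]
  have hl1 (v : V) : listOp M [v] [] = v := hM10 _ _
  have hr1 (v : V) : listOp M [] [v] = v := hM01 _ _
  have hl2 (u v : V) (w : List V) : listOp M (u :: v :: w) [] = 0 := by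
    rw [listOp, List.length_nil, hMp0 _ (by simp)]
    rfl
  have hr2 (u v : V) (w : List V) : listOp M [] (u :: v :: w) = 0 := by
    rw [listOp, List.length_nil, hM0q _ (by simp)]
    rfl
  have hstar (xs ys : List V) :
      star (word K xs) (word K ys) = blockSum M (word K) xs ys := by
    rcases xs with _ | ⟨x, xs⟩
    · rw [← unitEl_eq_word, hunit_left, blockSum_nil_left M hr1 hr2 fun w hw => word_eq_zero hw]
    rcases ys with _ | ⟨y, ys⟩
    · rw [← unitEl_eq_word, hunit_right, blockSum_nil_right M hl1 hl2 fun w hw => word_eq_zero hw]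
    obtain ⟨f, hf⟩ := exists_ofFn_eq (x :: xs)
    obtain ⟨g, hg⟩ := exists_ofFn_eq (y :: ys)
    rw [← hf, ← hg, ← el_eq_word, ← el_eq_word, hform _ _ (by simp) (by simp),
      blockSum_ofFn M _ (by simp)]
    simp only [word_ofFn]
  have hleft (xs ys zs : List V) : star (star (word K xs) (word K ys)) (word K zs)
      = blockSum M (fun w => blockSum M (word K) w zs) xs ys := by
    rw [hstar, ← LinearMap.flip_apply, map_blockSum_word]
    simp only [LinearMap.flip_apply, hstar]
  have hright (xs ys zs : List V) : star (word K xs) (star (word K ys) (word K zs))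
      = blockSum M (fun w => blockSum M (word K) xs w) ys zs := by
    rw [hstar ys, map_blockSum_word]
    simp only [hstar]
  constructor
  · intro hassoc i j k hi hj _ x y z
    rw [RrelM_iff M hi hj]
    generalize List.ofFn (fun s : Fin i => x s) = xs
    generalize List.ofFn (fun s : Fin j => y s) = ys
    generalize List.ofFn (fun s : Fin k => z s) = zs
    have h := congrArg (toLetter K V).toAddMonoidHom (hassoc (word K xs) (word K ys) (word K zs))
    rw [hleft, hright, map_blockSum, map_blockSum] at h
    simpa only [LinearMap.toAddMonoidHom_coe, toLetter_blockSum_word M h00, leftBrace,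
      rightBrace] using h
  · intro hR
    have hbrace (xs ys zs : List V) : leftBrace M xs ys zs = rightBrace M xs ys zs := by
      by_cases h : xs = [] ∨ ys = [] ∨ zs = []
      · exact leftBrace_eq_rightBrace_of_nil M h00 hl1 hl2 hr1 hr2 h
      simp only [not_or, ← List.length_pos_iff_ne_nil] at h
      obtain ⟨x, hx⟩ := exists_ofFn_eq xs
      obtain ⟨y, hy⟩ := exists_ofFn_eq ys
      obtain ⟨z, hz⟩ := exists_ofFn_eq zs
      have := (RrelM_iff M h.1 h.2.1 x y z).1 (hR _ _ _ h.1 h.2.1 h.2.2 x y z)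
      rwa [hx, hy, hz] at this
    have hwords (xs ys zs : List V) : star (star (word K xs) (word K ys)) (word K zs)
        = star (word K xs) (star (word K ys) (word K zs)) := by
      rw [hleft, hright]
      simp only [blockSum_word_eq]
      have := congrArg (TensorAlgebra.toDirectSum (R := K) (M := V)).toLinearMap.toAddMonoidHom
        (leftAssoc_eq_rightAssoc M (TensorAlgebra.ι K : V →ₗ[K] TensorAlgebra K V).toAddMonoidHom
          h00 hbrace xs ys zs)
      rwa [map_blockSum, map_blockSum] at this
    intro a b c
    induction a using tensorModule_induction with
    | hzero => simp
    | hadd a a' h h' => simp [h, h']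
    | hsmul r a h => simp [h]
    | hword xs =>
    induction b using tensorModule_induction with
    | hzero => simp
    | hadd b b' h h' => simp [h, h']
    | hsmul r b h => simp [h]
    | hword ys =>
    induction c using tensorModule_induction with
    | hzero => simp
    | hadd c c' h h' => simp [h, h']
    | hsmul r c h => simp [h]
    | hword zs => exact hwords xs ys zs

end
end

section
/- Let K be a field, R a K-module, and let * be any associative K-bilinear product on the reduced tensor module T̄(R) = ⊕_{n≥1} R^{⊗n} (extended to T(R) = K·1 ⊕ T̄(R) so that 1 is a unit). Define a bilinear operation ≻ on T̄(R) by x ≻ (v₁⊗…⊗v_l) := (x * (v₁⊗…⊗v_{l−1})) ⊗ v_l for l ≥ 2, and x ≻ v := x ⊗ v for v ∈ R, extended linearly in the second variable componentwise. Then (x * y) ≻ z = x ≻ (y ≻ z) for all x, y, z ∈ T̄(R); that is, (T̄(R), *, ≻) is a dipterous algebra. -/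
section

variable (K : Type*) [Field K] (V : Type*) [AddCommGroup V] [Module K V]

/-- Linear maps agreeing on the pure tensors of a given degree agree in that degree. -/
theorem map_of_eq_of_map_el_eq {W : Type*} [AddCommGroup W] [Module K W]
    (f g : TensorModule K V →ₗ[K] W) (n : ℕ)
    (h : ∀ x : ℕ → V, f (el K V n x) = g (el K V n x)) (t : TensorPower K n V) :
    f (DirectSum.of (fun n => TensorPower K n V) n t)
      = g (DirectSum.of (fun n => TensorPower K n V) n t) := by
  have hfg : f ∘ₗ DirectSum.lof K ℕ (fun n => TensorPower K n V) n
      = g ∘ₗ DirectSum.lof K ℕ (fun n => TensorPower K n V) n := by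
    refine PiTensorProduct.ext (MultilinearMap.ext fun y => ?_)
    have hy := h fun k => if hk : k < n then y ⟨k, hk⟩ else 0
    simpa [el, DirectSum.lof_eq_of] using hy
  exact LinearMap.congr_fun hfg t

/-- Linear maps agreeing on the pure tensors of positive degree agree on the reduced tensor
module. -/
theorem map_eq_of_map_el_eq_of_pos {W : Type*} [AddCommGroup W] [Module K W]
    (f g : TensorModule K V →ₗ[K] W)
    (h : ∀ n : ℕ, 0 < n → ∀ x : ℕ → V, f (el K V n x) = g (el K V n x))
    (c : TensorModule K V) (hc : c 0 = 0) : f c = g c := by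
  classical
  rw [← DirectSum.sum_support_of c, map_sum, map_sum]
  refine Finset.sum_congr rfl fun n _ => ?_
  rcases n.eq_zero_or_pos with rfl | hn
  · simp [hc]
  · exact map_of_eq_of_map_el_eq K V f g n (h n hn) (c n)

theorem el_zero (x : ℕ → V) : el K V 0 x = unitEl K V := by
  unfold el unitEl
  congr 2
  exact Subsingleton.elim _ _

theorem el_apply_zero_of_pos {n : ℕ} (hn : 0 < n) (x : ℕ → V) : el K V n x 0 = 0 :=
  DirectSum.of_eq_of_ne _ _ _ hn.ne

theorem el_succ (n : ℕ) (x : ℕ → V) :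
    el K V (n + 1) x = DirectSum.of (fun n => TensorPower K n V) (n + 1)
      (PiTensorProduct.tprod K (Fin.snoc (fun i : Fin n => x i.1) (x n))) := by
  unfold el
  congr 2
  funext i
  refine Fin.lastCases ?_ (fun j => ?_) i <;> simp

theorem el_congr {n : ℕ} {x y : ℕ → V} (h : ∀ k < n, x k = y k) : el K V n x = el K V n y := by
  unfold el
  congr 2
  funext i
  exact h i i.2

/-- Let `*` be any associative bilinear product on the reduced tensor
module `T̄(V)` (extended to `T(V)` so that `1` is a unit), and define
`x ≻ (v₁⊗⋯⊗v_l) := (x * (v₁⊗⋯⊗v_{l-1})) ⊗ v_l` for `l ≥ 2` and `x ≻ v := x ⊗ v` for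
`v ∈ V`, extended linearly. Then `(x * y) ≻ z = x ≻ (y ≻ z)` for all `x, y, z ∈ T̄(V)`:
`(T̄(V), *, ≻)` is a dipterous algebra.
(Here `rmul v` is right concatenation `− ⊗ v` by an element `v ∈ V`.) -/
theorem reduced_tensor_module_dipterous
    (star succ : TensorModule K V →ₗ[K] TensorModule K V →ₗ[K] TensorModule K V)
    (rmul : V →ₗ[K] TensorModule K V →ₗ[K] TensorModule K V)
    (hrmul : ∀ (v : V) (n : ℕ) (x : ℕ → V),
      rmul v (el K V n x)
        = DirectSum.of (fun n => TensorPower K n V) (n + 1)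
            (PiTensorProduct.tprod K (Fin.snoc (fun i : Fin n => x i.1) v)))
    (hassoc : ∀ a b c : TensorModule K V,
      a 0 = 0 → b 0 = 0 → c 0 = 0 → star (star a b) c = star a (star b c))
    (hreduced : ∀ a b : TensorModule K V, a 0 = 0 → b 0 = 0 → (star a b) 0 = 0)
    (hunit_left : ∀ a : TensorModule K V, star (unitEl K V) a = a)
    (hunit_right : ∀ a : TensorModule K V, star a (unitEl K V) = a)
    (hsucc_one : ∀ (a : TensorModule K V) (x : ℕ → V),
      succ a (el K V 1 x) = rmul (x 0) a)
    (hsucc : ∀ (a : TensorModule K V) (l : ℕ), 2 ≤ l → ∀ x : ℕ → V,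
      succ a (el K V l x) = rmul (x (l - 1)) (star a (el K V (l - 1) x))) :
    ∀ a b c : TensorModule K V, a 0 = 0 → b 0 = 0 → c 0 = 0 →
      succ (star a b) c = succ a (succ b c) := by
  have rmul_el_eq_el_succ (n : ℕ) (x : ℕ → V) : rmul (x n) (el K V n x) = el K V (n + 1) x := by
    rw [hrmul, el_succ]
  have succ_el_succ (a : TensorModule K V) (n : ℕ) (x : ℕ → V) :
      succ a (el K V (n + 1) x) = rmul (x n) (star a (el K V n x)) := by
    rcases n.eq_zero_or_pos with rfl | hn
    · rw [el_zero, hunit_right, hsucc_one]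
    · exact hsucc a (n + 1) (by lia) x
  have succ_rmul (a : TensorModule K V) (v : V) (y : TensorModule K V) :
      succ a (rmul v y) = rmul v (star a y) := by
    induction y using DirectSum.induction_on with
    | zero => simp
    | add y z hy hz => simp only [map_add, hy, hz]
    | of n t =>
      refine map_of_eq_of_map_el_eq K V (succ a ∘ₗ rmul v) (rmul v ∘ₗ star a) n (fun x => ?_) t
      have hx : el K V n x = el K V n (Function.update x n v) :=
        el_congr K V fun k hk => by simp [hk.ne]
      have h := succ_el_succ a n (Function.update x n v)
      rw [← rmul_el_eq_el_succ, ← hx, Function.update_self] at h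
      exact h
  intro a b c ha hb hc
  refine map_eq_of_map_el_eq_of_pos K V (succ (star a b)) (succ a ∘ₗ succ b) ?_ c hc
  intro n hn x
  obtain ⟨n, rfl⟩ := Nat.exists_eq_succ_of_ne_zero hn.ne'
  rw [LinearMap.comp_apply, succ_el_succ, succ_el_succ, succ_rmul]
  rcases n.eq_zero_or_pos with rfl | hn
  · simp only [el_zero, hunit_right]
  · rw [hassoc a b _ ha hb (el_apply_zero_of_pos K V hn x)]

end
end

section
/- Let K be a commutative ring and let A and B be dipterous algebras over K, i.e., K-modules with bilinear operations *_A, ≻_A and *_B, ≻_B satisfying (x*y)*z = x*(y*z) and (x*y)≻z = x≻(y≻z). Define bilinear operations on A ⊗_K B by (a⊗b) * (a'⊗b') := (a *_A a') ⊗ (b *_B b') and (a⊗b) ≻ (a'⊗b') := (a *_A a') ⊗ (b ≻_B b') on pure tensors, extended bilinearly. Then these two operations again satisfy (x*y)*z = x*(y*z) and (x*y)≻z = x≻(y≻z), so A ⊗_K B is a dipterous algebra. -/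
open TensorProduct

/-- The identity `s (m x y) z = s x (s y z)` for bilinear maps on a tensor product can be checked
on pure tensors. -/
theorem TensorProduct.mixed_assoc_of_tmul {K A B : Type*} [CommSemiring K]
    [AddCommMonoid A] [Module K A] [AddCommMonoid B] [Module K B]
    (m s : A ⊗[K] B →ₗ[K] A ⊗[K] B →ₗ[K] A ⊗[K] B)
    (h : ∀ (a a' a'' : A) (b b' b'' : B),
      s (m (a ⊗ₜ[K] b) (a' ⊗ₜ[K] b')) (a'' ⊗ₜ[K] b'') =
        s (a ⊗ₜ[K] b) (s (a' ⊗ₜ[K] b') (a'' ⊗ₜ[K] b'')))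
    (x y z : A ⊗[K] B) : s (m x y) z = s x (s y z) := by
  induction x with
  | zero => simp
  | add x₁ x₂ h₁ h₂ => simp [h₁, h₂]
  | tmul a b =>
    induction y with
    | zero => simp
    | add y₁ y₂ h₁ h₂ => simp [h₁, h₂]
    | tmul a' b' =>
      induction z with
      | zero => simp
      | add z₁ z₂ h₁ h₂ => simp [h₁, h₂]
      | tmul a'' b'' => exact h a a' a'' b b' b''

/-- The tensor product of two dipterous algebras, with
`(a⊗b)*(a'⊗b') := (a*a')⊗(b*b')` and `(a⊗b)≻(a'⊗b') := (a*a')⊗(b≻b')`, is again a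
dipterous algebra. -/
theorem tensorProduct_dipterous (K A B : Type*) [CommRing K]
    [AddCommGroup A] [Module K A] [AddCommGroup B] [Module K B]
    (mA sA : A →ₗ[K] A →ₗ[K] A) (mB sB : B →ₗ[K] B →ₗ[K] B)
    (hA1 : ∀ x y z : A, mA (mA x y) z = mA x (mA y z))
    (hA2 : ∀ x y z : A, sA (mA x y) z = sA x (sA y z))
    (hB1 : ∀ x y z : B, mB (mB x y) z = mB x (mB y z))
    (hB2 : ∀ x y z : B, sB (mB x y) z = sB x (sB y z))
    (star succ : A ⊗[K] B →ₗ[K] A ⊗[K] B →ₗ[K] A ⊗[K] B)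
    (hstar : ∀ (a a' : A) (b b' : B),
      star (a ⊗ₜ[K] b) (a' ⊗ₜ[K] b') = mA a a' ⊗ₜ[K] mB b b')
    (hsucc : ∀ (a a' : A) (b b' : B),
      succ (a ⊗ₜ[K] b) (a' ⊗ₜ[K] b') = mA a a' ⊗ₜ[K] sB b b') :
    (∀ x y z : A ⊗[K] B, star (star x y) z = star x (star y z)) ∧
    (∀ x y z : A ⊗[K] B, succ (star x y) z = succ x (succ y z)) := by
  exact ⟨TensorProduct.mixed_assoc_of_tmul star star fun a a' a'' b b' b'' => by
      simp only [hstar, hA1, hB1],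
    TensorProduct.mixed_assoc_of_tmul star succ fun a a' a'' b b' b'' => by
      simp only [hstar, hsucc, hA1, hB2]⟩
end

section
/- Let (A, *, ≻) be a dipterous algebra over a commutative ring K, i.e., (x*y)*z = x*(y*z) and (x*y)≻z = x≻(y≻z) for all x,y,z. Define x ≺ y := x*y − x≻y, and define M₁₁(u;v) := u*v − u≻v − v≻u, M₂₁(u,v;w) := (u≻v)≺w − u≻(v≺w), and M₁₂(u;v,w) := u*(v≻w) − (u*v)≻w − v≻(u*w − u≻w − w≻u) − (v≻w)≻u. Then for all u,v,w ∈ A: M₂₁(u,v;w) + M₂₁(v,u;w) + M₁₁(M₁₁(u;v);w) = M₁₁(u;M₁₁(v;w)) + M₁₂(u;v,w) + M₁₂(u;w,v). -/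
/-- In any dipterous algebra the induced multibrace operations `M₁₁`, `M₂₁`,
`M₁₂` satisfy the first nontrivial multibrace relation (R₁₁₁). -/
theorem dipterous_R111 (K A : Type*) [CommRing K] [AddCommGroup A] [Module K A]
    (star succ : A →ₗ[K] A →ₗ[K] A)
    (hstar : ∀ x y z : A, star (star x y) z = star x (star y z))
    (hdipt : ∀ x y z : A, succ (star x y) z = succ x (succ y z)) :
    ∀ u v w : A,
      let prec : A → A → A := fun x y => star x y - succ x y
      let M11 : A → A → A := fun a b => star a b - succ a b - succ b a
      let M21 : A → A → A → A := fun a b c => prec (succ a b) c - succ a (prec b c)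
      let M12 : A → A → A → A := fun a b c =>
        star a (succ b c) - succ (star a b) c
          - succ b (star a c - succ a c - succ c a) - succ (succ b c) a
      M21 u v w + M21 v u w + M11 (M11 u v) w
        = M11 u (M11 v w) + M12 u v w + M12 u w v := by
  intro u v w
  simp only [map_sub, LinearMap.sub_apply, hstar, hdipt]
  abel
end

section
/- Let (A, *, ≻) be a dipterous algebra over a field K. Set ω^≻(a₁,…,a_k) := ((a₁≻a₂)≻…)≻a_k, and define multilinear operations M_{pq} : A^{⊗p} ⊗ A^{⊗q} → A recursively by M_{00} = 0, M_{10} = M_{01} = id, M_{p0} = 0 = M_{0q} for p,q ≥ 2, and for p,q ≥ 1: M_{pq}(x₁,…,x_p; y₁,…,y_q) := ω^≻(x₁,…,x_p) * ω^≻(y₁,…,y_q) − Σ_{k=2}^{p+q} Σ ω^≻( M_{i₁j₁}(x¹;y¹), …, M_{i_kj_k}(x^k;y^k) ), the inner sum running over all sequences (i₁,…,i_k), (j₁,…,j_k) of nonnegative integers with i₁+…+i_k = p, j₁+…+j_k = q and i_t + j_t ≥ 1, where x^t is the consecutive block x_{i₁+…+i_{t−1}+1},…,x_{i₁+…+i_t}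 (similarly y^t). Then the operations M_{pq} satisfy all the multibrace relations (R_{ijk}) for i,j,k ≥ 1: Σ_{l=1}^{i+j} Σ M_{lk}( M_{i₁j₁}(x¹;y¹) ⊗ … ⊗ M_{i_lj_l}(x^l;y^l) ; z₁⊗…⊗z_k ) = Σ_{m=1}^{j+k} Σ M_{im}( x₁⊗…⊗x_i ; M_{j₁k₁}(y¹;z¹) ⊗ … ⊗ M_{j_mk_m}(y^m;z^m) ), with inner sums over sequences of nonnegative integers summing to the appropriate totals with each pair (i_t,j_t), resp. (j_t,k_t), nonzero, and consecutive blocks as above. In other words, every dipterous algebra carries a natural multibrace algebra structure. -/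
open Finset

section Ops
variable {A : Type*} [AddCommGroup A]

/-- `M_{i_t j_t}(x^t; y^t)`: the operation `M` applied to the `t`-th consecutive blocks of
the sequences `x` and `y`, as prescribed by the composition `c`. -/
def blockVal (M : ∀ p q : ℕ, (Fin p → A) → (Fin q → A) → A)
    {k : ℕ} (c : Fin k → ℕ × ℕ) (x y : ℕ → A) (t : Fin k) : A :=
  M (c t).1 (c t).2 (fun s => x (off1 c t + s.1)) (fun s => y (off2 c t + s.1))

/-- The multibrace relation `(R_{ijk})`. -/
def Rrel (M : ∀ p q : ℕ, (Fin p → A) → (Fin q → A) → A)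
    (i j k : ℕ) (x y z : ℕ → A) : Prop :=
  ∑ l ∈ Finset.Icc 1 (i + j), ∑ c ∈ Comps l i j,
      M l k (fun t : Fin l => blockVal M c x y t) (fun s : Fin k => z s.1)
    = ∑ m ∈ Finset.Icc 1 (j + k), ∑ c ∈ Comps m j k,
        M i m (fun s : Fin i => x s.1) (fun t : Fin m => blockVal M c y z t)

/-- `ω^≻`: `omegaIter s x n = ((x₀ ≻ x₁) ≻ ⋯) ≻ x_n`. -/
def omegaIter (s : A → A → A) (x : ℕ → A) : ℕ → A
  | 0 => x 0
  | n + 1 => s (omegaIter s x n) (x (n + 1))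

end Ops

namespace Multibrace

lemma length_add_lt_of_append {A : Type*} {u u₁ u₂ v v₁ v₂ : List A}
    (hu : u₁ ++ u₂ = u) (hv : v₁ ++ v₂ = v) (h : ¬(u₁ = [] ∧ v₁ = [])) :
    u₂.length + v₂.length < u.length + v.length := by
  have : 0 < u₁.length + v₁.length := by
    by_contra h0
    exact h ⟨List.length_eq_zero_iff.1 (by omega), List.length_eq_zero_iff.1 (by omega)⟩
  subst hu hv
  simp only [List.length_append]
  omega

section Splittings
variable {A : Type*} [AddCommGroup A]

/-- The sum of `φ u₁ u₂` over all decompositions `u = u₁ ++ u₂`. -/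
def splitSum (u : List A) (φ : List A → List A → A) : A :=
  ∑ n ∈ range (u.length + 1), φ (u.take n) (u.drop n)

@[simp] lemma splitSum_nil (φ : List A → List A → A) : splitSum [] φ = φ [] [] := by
  simp [splitSum]

lemma splitSum_cons (a : A) (u : List A) (φ : List A → List A → A) :
    splitSum (a :: u) φ = φ [] (a :: u) + splitSum u fun u₁ u₂ => φ (a :: u₁) u₂ := by
  simp only [splitSum, List.length_cons]
  rw [sum_range_succ', add_comm]
  simp

lemma splitSum_congr {u : List A} {φ ψ : List A → List A → A}
    (h : ∀ u₁ u₂, u₁ ++ u₂ = u → φ u₁ u₂ = ψ u₁ u₂) : splitSum u φ = splitSum u ψ :=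
  sum_congr rfl fun _ _ => h _ _ (List.take_append_drop _ _)

@[simp] lemma splitSum_zero (u : List A) : splitSum u (fun _ _ => (0 : A)) = 0 := by
  simp [splitSum]

lemma splitSum_add (u : List A) (φ ψ : List A → List A → A) :
    splitSum u (fun u₁ u₂ => φ u₁ u₂ + ψ u₁ u₂) = splitSum u φ + splitSum u ψ :=
  sum_add_distrib

lemma splitSum_sub (u : List A) (φ ψ : List A → List A → A) :
    splitSum u (fun u₁ u₂ => φ u₁ u₂ - ψ u₁ u₂) = splitSum u φ - splitSum u ψ :=
  sum_sub_distrib _ _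

lemma splitSum_comm (u v : List A) (φ : List A → List A → List A → List A → A) :
    splitSum u (fun u₁ u₂ => splitSum v fun v₁ v₂ => φ u₁ u₂ v₁ v₂)
      = splitSum v fun v₁ v₂ => splitSum u fun u₁ u₂ => φ u₁ u₂ v₁ v₂ :=
  sum_comm

lemma splitSum_sum {ι : Type*} (s : Finset ι) (u : List A) (φ : ι → List A → List A → A) :
    splitSum u (fun u₁ u₂ => ∑ i ∈ s, φ i u₁ u₂) = ∑ i ∈ s, splitSum u (φ i) :=
  sum_comm

lemma map_splitSum {B : Type*} (S : (B → A) →+ A) (u : List A)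
    (φ : List A → List A → B → A) :
    S (fun b => splitSum u fun u₁ u₂ => φ u₁ u₂ b) = splitSum u fun u₁ u₂ => S (φ u₁ u₂) := by
  unfold splitSum
  rw [← map_sum]
  congr 1
  ext b
  simp

lemma map_splitSum' (S : A →+ A) (u : List A) (φ : List A → List A → A) :
    S (splitSum u φ) = splitSum u fun u₁ u₂ => S (φ u₁ u₂) :=
  map_sum _ _ _

/-- Coassociativity of deconcatenation. -/
lemma splitSum_assoc (u : List A) (φ : List A → List A → List A → A) :
    splitSum u (fun u₁ w => splitSum w fun u₂ u₃ => φ u₁ u₂ u₃)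
      = splitSum u fun w u₃ => splitSum w fun u₁ u₂ => φ u₁ u₂ u₃ := by
  induction u generalizing φ with
  | nil => simp
  | cons a u ih =>
    simp only [splitSum_cons, splitSum_nil, splitSum_add, ih]
    abel

lemma splitSum_eq_first {u : List A} {φ : List A → List A → A}
    (h : ∀ u₁ u₂, u₁ ++ u₂ = u → u₁ ≠ [] → φ u₁ u₂ = 0) : splitSum u φ = φ [] u := by
  cases u with
  | nil => simp
  | cons a u =>
    rw [splitSum_cons, splitSum_congr (ψ := fun _ _ => 0), splitSum_zero, add_zero]
    exact fun u₁ u₂ hu => h _ _ (by simp [hu]) (by simp)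

lemma splitSum_eq_last {u : List A} {φ : List A → List A → A}
    (h : ∀ u₁ u₂, u₁ ++ u₂ = u → u₂ ≠ [] → φ u₁ u₂ = 0) : splitSum u φ = φ u [] := by
  induction u generalizing φ with
  | nil => simp
  | cons a u ih =>
    rw [splitSum_cons, h [] (a :: u) rfl (by simp), zero_add]
    exact ih fun u₁ u₂ hu => h _ _ (by simp [hu])

end Splittings

section BlockSums
variable {A : Type*} [AddCommGroup A] (m : List A → List A → A)

/-- The sum of `f [m u₁ v₁, …, m u_k v_k]` over all decompositions of `u` and `v` into `k`
consecutive blocks such that `u_t` and `v_t` are never both empty. -/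
def blockSumLen : ℕ → List A → List A → (List A → A) → A
  | 0, u, v, f => if u = [] ∧ v = [] then f [] else 0
  | k + 1, u, v, f => splitSum u fun u₁ u₂ => splitSum v fun v₁ v₂ =>
      if u₁ = [] ∧ v₁ = [] then 0 else blockSumLen k u₂ v₂ fun ws => f (m u₁ v₁ :: ws)

lemma blockSumLen_add (k : ℕ) (u v : List A) (f g : List A → A) :
    blockSumLen m k u v (f + g) = blockSumLen m k u v f + blockSumLen m k u v g := by
  induction k generalizing u v f g with
  | zero => simp only [blockSumLen, Pi.add_apply]; split_ifs <;> simp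
  | succ k ih =>
    simp only [blockSumLen, ← splitSum_add]
    refine splitSum_congr fun u₁ u₂ _ => splitSum_congr fun v₁ v₂ _ => ?_
    split_ifs
    · simp
    · exact ih _ _ _ _

lemma blockSumLen_eq_zero {k : ℕ} {u v : List A} (h : u.length + v.length < k)
    (f : List A → A) : blockSumLen m k u v f = 0 := by
  induction k generalizing u v f with
  | zero => omega
  | succ k ih =>
    rw [blockSumLen, splitSum_congr (ψ := fun _ _ => 0), splitSum_zero]
    intro u₁ u₂ hu
    rw [splitSum_congr (ψ := fun _ _ => 0), splitSum_zero]
    intro v₁ v₂ hv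
    split_ifs with h'
    · rfl
    · have := length_add_lt_of_append hu hv h'
      exact ih (by omega) _

/-- The sum of `f [m u₁ v₁, …, m u_k v_k]` over all `k` and all decompositions of `u` and `v`
into `k` consecutive blocks such that `u_t` and `v_t` are never both empty. -/
def blockSum (u v : List A) : (List A → A) →+ A :=
  AddMonoidHom.mk' (fun f => ∑ k ∈ range (u.length + v.length + 1), blockSumLen m k u v f)
    fun f g => by simp only [blockSumLen_add, sum_add_distrib]

lemma blockSum_apply (u v : List A) (f : List A → A) :
    blockSum m u v f = ∑ k ∈ range (u.length + v.length + 1), blockSumLen m k u v f := rfl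

lemma blockSum_eq_of_lt {u v : List A} {n : ℕ} (h : u.length + v.length < n) (f : List A → A) :
    blockSum m u v f = ∑ k ∈ range n, blockSumLen m k u v f := by
  rw [blockSum_apply]
  refine sum_subset (range_mono h) fun k _ hk => blockSumLen_eq_zero m ?_ f
  simp only [mem_range] at hk
  omega

@[simp] lemma blockSum_nil (f : List A → A) : blockSum m [] [] f = f [] := by
  simp [blockSum_apply, blockSumLen]

lemma blockSum_rec {u v : List A} (h : ¬(u = [] ∧ v = [])) (f : List A → A) :
    blockSum m u v f = splitSum u fun u₁ u₂ => splitSum v fun v₁ v₂ =>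
      if u₁ = [] ∧ v₁ = [] then 0 else blockSum m u₂ v₂ fun ws => f (m u₁ v₁ :: ws) := by
  rw [blockSum_apply, sum_range_succ']
  simp only [blockSumLen, if_neg h, add_zero, ← splitSum_sum]
  refine splitSum_congr fun u₁ u₂ hu => splitSum_congr fun v₁ v₂ hv => ?_
  split_ifs with h'
  · simp
  · exact (blockSum_eq_of_lt m (length_add_lt_of_append hu hv h') _).symm

lemma blockSum_congr {u v : List A} (h : ¬(u = [] ∧ v = [])) {f g : List A → A}
    (hfg : ∀ w ws, f (w :: ws) = g (w :: ws)) : blockSum m u v f = blockSum m u v g := by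
  simp only [blockSum_rec m h, hfg]

lemma map_blockSum (H : A →+ A) (u v : List A) (f : List A → A) :
    H (blockSum m u v f) = blockSum m u v fun ws => H (f ws) := by
  by_cases h : u = [] ∧ v = []
  · obtain ⟨rfl, rfl⟩ := h
    simp
  · rw [blockSum_rec m h, blockSum_rec m h, map_splitSum']
    refine splitSum_congr fun u₁ u₂ hu => ?_
    rw [map_splitSum']
    refine splitSum_congr fun v₁ v₂ hv => ?_
    split_ifs with h'
    · simp
    · have := length_add_lt_of_append hu hv h'
      exact map_blockSum H u₂ v₂ _
termination_by u.length + v.length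

/-- `blockSum` is compatible with deconcatenation. -/
lemma blockSum_splitSum (u v : List A) (h : List A → List A → A) :
    blockSum m u v (fun ws => splitSum ws h)
      = splitSum u fun u₁ u₂ => splitSum v fun v₁ v₂ =>
          blockSum m u₁ v₁ fun w₁ => blockSum m u₂ v₂ fun w₂ => h w₁ w₂ := by
  by_cases huv : u = [] ∧ v = []
  · obtain ⟨rfl, rfl⟩ := huv
    simp
  let e (u₁ u₂ u₃ v₁ v₂ v₃ : List A) : A :=
    if u₁ = [] ∧ v₁ = [] then 0 else
      blockSum m u₂ v₂ fun w₁ => blockSum m u₃ v₃ fun w₂ => h (m u₁ v₁ :: w₁) w₂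
  have hl : blockSum m u v (fun ws => splitSum ws h) = blockSum m u v (h [])
      + splitSum u fun u₁ u' => splitSum u' fun u₂ u₃ => splitSum v fun v₁ v' =>
          splitSum v' fun v₂ v₃ => e u₁ u₂ u₃ v₁ v₂ v₃ := by
    rw [blockSum_rec m huv, blockSum_rec m huv, ← splitSum_add]
    refine splitSum_congr fun u₁ u' hu => ?_
    rw [splitSum_comm, ← splitSum_add]
    refine splitSum_congr fun v₁ v' hv => ?_
    by_cases h' : u₁ = [] ∧ v₁ = []
    · simp [e, h']
    · have := length_add_lt_of_append hu hv h'
      simp only [if_neg h', e, splitSum_cons]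
      rw [← blockSum_splitSum u' v' fun w₁ w₂ => h (m u₁ v₁ :: w₁) w₂, ← map_add]
      rfl
  have hr (u₁ u₂ v₁ v₂ : List A) :
      (blockSum m u₁ v₁ fun w₁ => blockSum m u₂ v₂ fun w₂ => h w₁ w₂)
        = (if u₁ = [] ∧ v₁ = [] then blockSum m u₂ v₂ (h []) else 0)
          + splitSum u₁ fun a b => splitSum v₁ fun c d => e a b u₂ c d v₂ := by
    by_cases h' : u₁ = [] ∧ v₁ = []
    · simp [e, h']
    · rw [blockSum_rec m h', if_neg h', zero_add]
  simp only [hl, hr, splitSum_add]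
  congr 1
  · rw [splitSum_eq_first, splitSum_eq_first]
    · simp
    · intro v₁ v₂ _ hv
      simp [hv]
    · intro u₁ u₂ _ hu
      simp [hu]
  · rw [splitSum_assoc u fun u₁ u₂ u₃ => splitSum v fun v₁ v' =>
      splitSum v' fun v₂ v₃ => e u₁ u₂ u₃ v₁ v₂ v₃]
    refine splitSum_congr fun u₁ u₂ _ => ?_
    simp only [splitSum_assoc v]
    rw [splitSum_comm]
termination_by u.length + v.length

end BlockSums

section Dipterous
variable {K A : Type*} [Field K] [AddCommGroup A] [Module K A]

/-- `((a ≻ w₁) ≻ ⋯) ≻ w_n`. -/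
def foldSucc (succ : A →ₗ[K] A →ₗ[K] A) (a : A) (ws : List A) : A :=
  ws.foldl (fun a b => succ a b) a

lemma foldSucc_add (succ : A →ₗ[K] A →ₗ[K] A) (a b : A) :
    foldSucc succ (a + b) = foldSucc succ a + foldSucc succ b := by
  ext ws
  induction ws generalizing a b with
  | nil => rfl
  | cons w ws ih => simpa [foldSucc] using ih (succ a w) (succ b w)

lemma foldSucc_zero (succ : A →ₗ[K] A →ₗ[K] A) : foldSucc succ 0 = 0 := by
  simpa using foldSucc_add succ 0 0

/-- `ω^≻` on lists, with value `0` on the empty list. -/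
def omegaList (succ : A →ₗ[K] A →ₗ[K] A) : List A → A
  | [] => 0
  | a :: ws => foldSucc succ a ws

/-- `m u v` are the multibrace operations associated with `star` and `succ`, as functions of
lists. -/
structure IsDipterousBrace (star succ : A →ₗ[K] A →ₗ[K] A) (m : List A → List A → A) :
    Prop where
  nil_nil : m [] [] = 0
  single_nil (a : A) : m [a] [] = a
  nil_single (a : A) : m [] [a] = a
  long_nil (a b : A) (u : List A) : m (a :: b :: u) [] = 0
  nil_long (a b : A) (u : List A) : m [] (a :: b :: u) = 0
  star_omega (u v : List A) (hu : u ≠ []) (hv : v ≠ []) :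
    star (omegaList succ u) (omegaList succ v) = blockSum m u v (omegaList succ)

variable {star succ : A →ₗ[K] A →ₗ[K] A} {m : List A → List A → A}

namespace IsDipterousBrace

lemma blockSum_rec (hm : IsDipterousBrace star succ m) {u v : List A} (h : ¬(u = [] ∧ v = []))
    {F : A →ₗ[K] A} {g : List A → A} (hg : ∀ w ws, g (w :: ws) = foldSucc succ (F w) ws) :
    blockSum m u v g = splitSum u fun u₁ u₂ => splitSum v fun v₁ v₂ =>
      blockSum m u₂ v₂ (foldSucc succ (F (m u₁ v₁))) := by
  rw [Multibrace.blockSum_rec m h]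
  refine splitSum_congr fun u₁ u₂ _ => splitSum_congr fun v₁ v₂ _ => ?_
  split_ifs with h'
  · rw [h'.1, h'.2, hm.nil_nil, map_zero, foldSucc_zero, map_zero]
  · simp only [hg]

lemma blockSum_foldSucc_eq_zero (hm : IsDipterousBrace star succ m) {n : ℕ}
    (hz : ∀ u v : List A, u.length + v.length < n → 0 ∈ u ∨ 0 ∈ v → m u v = 0)
    (u v : List A) (hn : u.length + v.length < n) (h0 : 0 ∈ u ∨ 0 ∈ v) (a : A) :
    blockSum m u v (foldSucc succ a) = 0 := by
  have huv : ¬(u = [] ∧ v = []) := by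
    rintro ⟨rfl, rfl⟩
    simp at h0
  rw [hm.blockSum_rec huv (F := succ a) fun _ _ => rfl, splitSum_congr (ψ := fun _ _ => 0),
    splitSum_zero]
  intro u₁ u₂ hu
  rw [splitSum_congr (ψ := fun _ _ => 0), splitSum_zero]
  intro v₁ v₂ hv
  by_cases h : 0 ∈ u₁ ∨ 0 ∈ v₁
  · rw [hz u₁ v₁ _ h, map_zero, foldSucc_zero, map_zero]
    subst hu hv
    simp only [List.length_append] at hn
    omega
  · by_cases h' : u₁ = [] ∧ v₁ = []
    · rw [h'.1, h'.2, hm.nil_nil, map_zero, foldSucc_zero, map_zero]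
    · have := length_add_lt_of_append hu hv h'
      refine hm.blockSum_foldSucc_eq_zero hz u₂ v₂ (by omega) ?_ _
      subst hu hv
      simp only [List.mem_append] at h0
      tauto
termination_by u.length + v.length

lemma eq_zero_of_zero_mem (hm : IsDipterousBrace star succ m) (u v : List A)
    (h0 : 0 ∈ u ∨ 0 ∈ v) : m u v = 0 := by
  induction hn : u.length + v.length using Nat.strong_induction_on generalizing u v with
  | _ n ih =>
  replace ih (u v : List A) (hn : u.length + v.length < n) (h0 : 0 ∈ u ∨ 0 ∈ v) : m u v = 0 :=
    ih _ hn u v h0 rfl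
  rcases eq_or_ne u [] with rfl | hu
  · match v, h0 with
    | [a], h0 => rw [hm.nil_single]; simpa [eq_comm] using h0
    | a :: b :: v, _ => exact hm.nil_long a b v
  rcases eq_or_ne v [] with rfl | hv
  · match u, h0 with
    | [a], h0 => rw [hm.single_nil]; simpa [eq_comm] using h0
    | a :: b :: v, _ => exact hm.long_nil a b v
  have hω (w : List A) (hw : 0 ∈ w) : omegaList succ w = 0 := by
    have key (w : List A) (hw : 0 ∈ w) (a : A) : foldSucc succ a w = 0 := by
      induction w generalizing a with
      | nil => simp at hw
      | cons b w ihw =>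
        rcases List.mem_cons.1 hw with rfl | hw
        · change foldSucc succ (succ a 0) w = 0
          rw [map_zero, foldSucc_zero]
          rfl
        · exact ihw hw _
    cases w with
    | nil => rfl
    | cons b w =>
      rcases List.mem_cons.1 hw with rfl | hw
      · exact congrFun (foldSucc_zero succ) w
      · exact key w hw b
  have hs := hm.star_omega u v hu hv
  have hl : star (omegaList succ u) (omegaList succ v) = 0 := by
    rcases h0 with h0 | h0 <;> simp [hω _ h0]
  rw [hl, hm.blockSum_rec (fun h => hu h.1) (F := LinearMap.id) fun _ _ => rfl] at hs
  have aux (u₁ u₂ v₁ v₂ : List A) (h₁ : u₁ ++ u₂ = u) (h₂ : v₁ ++ v₂ = v)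
      (h : u₂ ≠ [] ∨ v₂ ≠ []) : blockSum m u₂ v₂ (foldSucc succ (m u₁ v₁)) = 0 := by
    have hlt : u₁.length + v₁.length < n := by
      have : 0 < u₂.length + v₂.length := by
        rcases h with h | h <;> have := List.length_pos_iff.2 h <;> omega
      rw [← hn, ← h₁, ← h₂, List.length_append, List.length_append]
      omega
    by_cases h' : 0 ∈ u₁ ∨ 0 ∈ v₁
    · rw [ih _ _ hlt h', foldSucc_zero, map_zero]
    · by_cases h'' : u₁ = [] ∧ v₁ = []
      · rw [h''.1, h''.2, hm.nil_nil, foldSucc_zero, map_zero]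
      · have := length_add_lt_of_append h₁ h₂ h''
        refine hm.blockSum_foldSucc_eq_zero ih u₂ v₂ (by omega) ?_ _
        subst h₁ h₂
        simp only [List.mem_append] at h0
        tauto
  rw [splitSum_eq_last, splitSum_eq_last] at hs
  · simpa [foldSucc] using hs.symm
  · exact fun v₁ v₂ h₂ h => aux _ _ _ _ (by simp) h₂ (Or.inr h)
  · intro u₁ u₂ h₁ h
    rw [splitSum_congr (ψ := fun _ _ => 0), splitSum_zero]
    exact fun v₁ v₂ h₂ => aux _ _ _ _ h₁ h₂ (Or.inl h)

lemma blockSum_nil_right (hm : IsDipterousBrace star succ m) (u : List A) (f : List A → A)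
    (hf : ∀ ws, 0 ∈ ws → f ws = 0) : blockSum m u [] f = f u := by
  induction u generalizing f with
  | nil => simp
  | cons a u ih =>
    rw [Multibrace.blockSum_rec m (by simp), splitSum_cons]
    simp only [splitSum_nil, and_self, if_true, zero_add, reduceCtorEq, false_and, if_false]
    rw [splitSum_eq_first, hm.single_nil]
    · exact ih _ fun ws h => hf _ (List.mem_cons_of_mem _ h)
    · rintro (_ | ⟨b, u₁⟩) u₂ _ h
      · exact absurd rfl h
      · rw [hm.long_nil, funext fun ws => hf (0 :: ws) (by simp)]
        exact map_zero _

lemma blockSum_nil_left (hm : IsDipterousBrace star succ m) (u : List A) (f : List A → A)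
    (hf : ∀ ws, 0 ∈ ws → f ws = 0) : blockSum m [] u f = f u := by
  induction u generalizing f with
  | nil => simp
  | cons a u ih =>
    rw [Multibrace.blockSum_rec m (by simp), splitSum_nil, splitSum_cons]
    simp only [and_self, if_true, zero_add, reduceCtorEq, and_false, if_false]
    rw [splitSum_eq_first, hm.nil_single]
    · exact ih _ fun ws h => hf _ (List.mem_cons_of_mem _ h)
    · rintro (_ | ⟨b, u₁⟩) u₂ _ h
      · exact absurd rfl h
      · rw [hm.nil_long, funext fun ws => hf (0 :: ws) (by simp)]
        exact map_zero _

end IsDipterousBrace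

/-- The left-hand side of the multibrace relation. -/
def leftBrace (m : List A → List A → A) (x y z : List A) : A :=
  blockSum m x y fun ws => m ws z

/-- The right-hand side of the multibrace relation. -/
def rightBrace (m : List A → List A → A) (x y z : List A) : A :=
  blockSum m y z fun ws => m x ws

namespace IsDipterousBrace

lemma leftSum_rec (hm : IsDipterousBrace star succ m) {x y z : List A}
    (h : ¬(x = [] ∧ y = [] ∧ z = []))
    {F : A →ₗ[K] A} {g : List A → A} (hg : ∀ w ws, g (w :: ws) = foldSucc succ (F w) ws) :
    (blockSum m x y fun ws => blockSum m ws z g)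
      = splitSum x fun x₁ x₂ => splitSum y fun y₁ y₂ => splitSum z fun z₁ z₂ =>
          blockSum m x₂ y₂ fun ws =>
            blockSum m ws z₂ (foldSucc succ (F (leftBrace m x₁ y₁ z₁))) := by
  have h₁ : (blockSum m x y fun ws => blockSum m ws z g)
      = blockSum m x y fun ws => splitSum ws fun w₁ w₂ => splitSum z fun z₁ z₂ =>
          blockSum m w₂ z₂ (foldSucc succ (F (m w₁ z₁))) := by
    by_cases hxy : x = [] ∧ y = []
    · obtain ⟨rfl, rfl⟩ := hxy
      simp only [blockSum_nil]
      rw [hm.blockSum_rec (by simpa using h) hg]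
    · refine blockSum_congr m hxy fun w ws => ?_
      rw [hm.blockSum_rec (by simp) hg]
  rw [h₁, blockSum_splitSum]
  refine splitSum_congr fun x₁ x₂ _ => splitSum_congr fun y₁ y₂ _ => ?_
  simp only [map_splitSum]
  refine splitSum_congr fun z₁ z₂ _ => ?_
  let H : A →+ A := AddMonoidHom.mk'
    (fun a => blockSum m x₂ y₂ fun ws => blockSum m ws z₂ (foldSucc succ (F a)))
    fun a b => by
      rw [← map_add]
      congr 1
      ext ws
      simp [foldSucc_add]
  exact (map_blockSum m H x₁ y₁ fun ws => m ws z₁).symm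

lemma rightSum_rec (hm : IsDipterousBrace star succ m) {x y z : List A}
    (h : ¬(x = [] ∧ y = [] ∧ z = []))
    {F : A →ₗ[K] A} {g : List A → A} (hg : ∀ w ws, g (w :: ws) = foldSucc succ (F w) ws) :
    (blockSum m y z fun ws => blockSum m x ws g)
      = splitSum x fun x₁ x₂ => splitSum y fun y₁ y₂ => splitSum z fun z₁ z₂ =>
          blockSum m y₂ z₂ fun ws =>
            blockSum m x₂ ws (foldSucc succ (F (rightBrace m x₁ y₁ z₁))) := by
  have h₁ : (blockSum m y z fun ws => blockSum m x ws g)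
      = blockSum m y z fun ws => splitSum ws fun w₁ w₂ => splitSum x fun x₁ x₂ =>
          blockSum m x₂ w₂ (foldSucc succ (F (m x₁ w₁))) := by
    by_cases hyz : y = [] ∧ z = []
    · obtain ⟨rfl, rfl⟩ := hyz
      simp only [blockSum_nil]
      rw [hm.blockSum_rec (by simpa using h) hg]
      simp
    · refine blockSum_congr m hyz fun w ws => ?_
      rw [hm.blockSum_rec (by simp) hg, splitSum_comm]
  rw [h₁, blockSum_splitSum]
  simp only [map_splitSum]
  rw [splitSum_comm x]
  refine splitSum_congr fun y₁ y₂ _ => ?_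
  rw [splitSum_comm x]
  refine splitSum_congr fun z₁ z₂ _ => splitSum_congr fun x₁ x₂ _ => ?_
  let H : A →+ A := AddMonoidHom.mk'
    (fun a => blockSum m y₂ z₂ fun ws => blockSum m x₂ ws (foldSucc succ (F a)))
    fun a b => by
      rw [← map_add]
      congr 1
      ext ws
      simp [foldSucc_add]
  exact (map_blockSum m H y₁ z₁ fun ws => m x₁ ws).symm

lemma leftBrace_nil (hm : IsDipterousBrace star succ m) : leftBrace m [] [] [] = 0 := by
  simp [leftBrace, hm.nil_nil]

/-- If the multibrace relations hold in total degree less than `n`, then the two iterated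
products agree in total degree less than `n`. -/
lemma leftSum_eq_rightSum (hm : IsDipterousBrace star succ m) {n : ℕ}
    (hR : ∀ x y z : List A, x.length + y.length + z.length < n →
      leftBrace m x y z = rightBrace m x y z)
    (x y z : List A) (hn : x.length + y.length + z.length < n) (a : A) :
    (blockSum m x y fun ws => blockSum m ws z (foldSucc succ a))
      = blockSum m y z fun ws => blockSum m x ws (foldSucc succ a) := by
  by_cases h : x = [] ∧ y = [] ∧ z = []
  · obtain ⟨rfl, rfl, rfl⟩ := h
    simp
  rw [hm.leftSum_rec h (F := succ a) fun _ _ => rfl, hm.rightSum_rec h (F := succ a) fun _ _ => rfl]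
  refine splitSum_congr fun x₁ x₂ hx => splitSum_congr fun y₁ y₂ hy =>
    splitSum_congr fun z₁ z₂ hz => ?_
  have hx' := congrArg List.length hx
  have hy' := congrArg List.length hy
  have hz' := congrArg List.length hz
  rw [List.length_append] at hx' hy' hz'
  rw [← hR x₁ y₁ z₁ (by omega)]
  by_cases h' : x₁ = [] ∧ y₁ = [] ∧ z₁ = []
  · obtain ⟨rfl, rfl, rfl⟩ := h'
    simp only [hm.leftBrace_nil, map_zero, foldSucc_zero]
    exact (map_zero (blockSum m x₂ y₂)).trans (map_zero (blockSum m y₂ z₂)).symm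
  · have : 0 < x₁.length + y₁.length + z₁.length := by
      by_contra h0
      exact h' ⟨List.length_eq_zero_iff.1 (by omega), List.length_eq_zero_iff.1 (by omega),
        List.length_eq_zero_iff.1 (by omega)⟩
    have : x₂.length + y₂.length + z₂.length < x.length + y.length + z.length := by omega
    exact hm.leftSum_eq_rightSum hR x₂ y₂ z₂ (by omega) _
termination_by x.length + y.length + z.length

lemma omega_assoc (hm : IsDipterousBrace star succ m)
    (hstar : ∀ x y z : A, star (star x y) z = star x (star y z))
    {x y z : List A} (hx : x ≠ []) (hy : y ≠ []) (hz : z ≠ []) :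
    (blockSum m x y fun ws => blockSum m ws z (omegaList succ))
      = blockSum m y z fun ws => blockSum m x ws (omegaList succ) := by
  have hl : (blockSum m x y fun ws => blockSum m ws z (omegaList succ))
      = star (star (omegaList succ x) (omegaList succ y)) (omegaList succ z) := by
    rw [hm.star_omega x y hx hy]
    refine (blockSum_congr m (fun h => hx h.1) fun w ws => ?_).trans
      (map_blockSum m (star.flip (omegaList succ z)).toAddMonoidHom x y (omegaList succ)).symm
    exact (hm.star_omega _ _ (by simp) hz).symm
  have hr : (blockSum m y z fun ws => blockSum m x ws (omegaList succ))
      = star (omegaList succ x) (star (omegaList succ y) (omegaList succ z)) := by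
    rw [hm.star_omega y z hy hz]
    refine (blockSum_congr m (fun h => hy h.1) fun w ws => ?_).trans
      (map_blockSum m (star (omegaList succ x)).toAddMonoidHom y z (omegaList succ)).symm
    exact (hm.star_omega _ _ hx (by simp)).symm
  rw [hl, hr, hstar]

theorem leftBrace_eq_rightBrace (hm : IsDipterousBrace star succ m)
    (hstar : ∀ x y z : A, star (star x y) z = star x (star y z)) (x y z : List A) :
    leftBrace m x y z = rightBrace m x y z := by
  induction hn : x.length + y.length + z.length using Nat.strong_induction_on
    generalizing x y z with
  | _ n ih =>
  replace ih (x y z : List A) (h : x.length + y.length + z.length < n) :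
      leftBrace m x y z = rightBrace m x y z := ih _ h x y z rfl
  have hl (z : List A) (ws : List A) (h : 0 ∈ ws) : m ws z = 0 :=
    hm.eq_zero_of_zero_mem _ _ (Or.inl h)
  have hr (x : List A) (ws : List A) (h : 0 ∈ ws) : m x ws = 0 :=
    hm.eq_zero_of_zero_mem _ _ (Or.inr h)
  have hid (u v : List A) (f : List A → A) (h₀ : f [] = 0) (h₁ : ∀ a, f [a] = a)
      (h₂ : ∀ a b ws, f (a :: b :: ws) = 0) : blockSum m u v f = m u v := by
    by_cases h : u = [] ∧ v = []
    · rw [h.1, h.2, blockSum_nil, h₀, hm.nil_nil]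
    have aux (a : A) (u₂ v₂ : List A) (h : u₂ ≠ [] ∨ v₂ ≠ []) :
        (blockSum m u₂ v₂ fun ws => f (a :: ws)) = 0 := by
      rw [← map_zero (blockSum m u₂ v₂)]
      exact blockSum_congr m (by tauto) fun w ws => h₂ a w ws
    rw [Multibrace.blockSum_rec m h, splitSum_eq_last, splitSum_eq_last]
    · simp [h, h₁]
    · intro v₁ v₂ _ hv
      split_ifs
      · rfl
      · exact aux _ _ _ (Or.inr hv)
    · intro u₁ u₂ _ hu
      rw [splitSum_congr (ψ := fun _ _ => 0), splitSum_zero]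
      intro v₁ v₂ _
      split_ifs
      · rfl
      · exact aux _ _ _ (Or.inl hu)
  rcases eq_or_ne x [] with rfl | hx
  · rw [leftBrace, hm.blockSum_nil_left _ _ (hl z), rightBrace,
      hid _ _ _ hm.nil_nil hm.nil_single hm.nil_long]
  rcases eq_or_ne z [] with rfl | hz
  · rw [rightBrace, hm.blockSum_nil_right _ _ (hr x), leftBrace,
      hid _ _ (fun ws => m ws []) hm.nil_nil hm.single_nil hm.long_nil]
  rcases eq_or_ne y [] with rfl | hy
  · rw [rightBrace, hm.blockSum_nil_left _ _ (hr x), leftBrace,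
      hm.blockSum_nil_right _ _ (hl z)]
  have key := sub_eq_zero.2 (hm.omega_assoc hstar hx hy hz)
  rw [hm.leftSum_rec (fun h => hx h.1) (F := LinearMap.id) fun _ _ => rfl,
    hm.rightSum_rec (fun h => hx h.1) (F := LinearMap.id) fun _ _ => rfl] at key
  simp only [← splitSum_sub, LinearMap.id_apply] at key
  have aux (x₁ x₂ y₁ y₂ z₁ z₂ : List A) (hx : x₁ ++ x₂ = x) (hy : y₁ ++ y₂ = y)
      (hz : z₁ ++ z₂ = z) (h : 0 < x₂.length + y₂.length + z₂.length) :
      (blockSum m x₂ y₂ fun ws => blockSum m ws z₂ (foldSucc succ (leftBrace m x₁ y₁ z₁)))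
        - (blockSum m y₂ z₂ fun ws =>
            blockSum m x₂ ws (foldSucc succ (rightBrace m x₁ y₁ z₁))) = 0 := by
    have hx' := congrArg List.length hx
    have hy' := congrArg List.length hy
    have hz' := congrArg List.length hz
    rw [List.length_append] at hx' hy' hz'
    rw [← ih x₁ y₁ z₁ (by omega), sub_eq_zero]
    by_cases h' : x₁ = [] ∧ y₁ = [] ∧ z₁ = []
    · obtain ⟨rfl, rfl, rfl⟩ := h'
      simp only [hm.leftBrace_nil, foldSucc_zero, map_zero]
      exact (map_zero (blockSum m x₂ y₂)).trans (map_zero (blockSum m y₂ z₂)).symm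
    · have : 0 < x₁.length + y₁.length + z₁.length := by
        by_contra h0
        exact h' ⟨List.length_eq_zero_iff.1 (by omega), List.length_eq_zero_iff.1 (by omega),
          List.length_eq_zero_iff.1 (by omega)⟩
      exact hm.leftSum_eq_rightSum ih x₂ y₂ z₂ (by omega) _
  rw [splitSum_eq_last, splitSum_eq_last, splitSum_eq_last] at key
  · simpa [foldSucc, sub_eq_zero] using key
  · intro z₁ z₂ h₃ h
    have := List.length_pos_iff.2 h
    exact aux _ _ _ _ _ _ (by simp) (by simp) h₃ (by omega)
  · intro y₁ y₂ h₂ h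
    have := List.length_pos_iff.2 h
    rw [splitSum_congr (ψ := fun _ _ => 0), splitSum_zero]
    exact fun z₁ z₂ h₃ => aux _ _ _ _ _ _ (by simp) h₂ h₃ (by omega)
  · intro x₁ x₂ h₁ h
    have := List.length_pos_iff.2 h
    rw [splitSum_congr (ψ := fun _ _ => 0), splitSum_zero]
    intro y₁ y₂ h₂
    rw [splitSum_congr (ψ := fun _ _ => 0), splitSum_zero]
    exact fun z₁ z₂ h₃ => aux _ _ _ _ _ _ h₁ h₂ h₃ (by omega)

end IsDipterousBrace

end Dipterous

section Compositions
variable {A : Type*}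

/-- The list `[x 0, …, x (n - 1)]`. -/
def initialList (n : ℕ) (x : ℕ → A) : List A := List.ofFn fun i : Fin n => x i

@[simp] lemma length_initialList (n : ℕ) (x : ℕ → A) : (initialList n x).length = n := by
  simp [initialList]

lemma initialList_eq_nil {n : ℕ} {x : ℕ → A} : initialList n x = [] ↔ n = 0 := by
  rw [← List.length_eq_zero_iff, length_initialList]

lemma initialList_getD (u : List A) (a : A) : initialList u.length (fun n => u.getD n a) = u := by
  refine List.ext_getElem (by simp) fun i h₁ h₂ => ?_
  simp [initialList]

lemma take_initialList {i n : ℕ} (h : i ≤ n) (x : ℕ → A) :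
    (initialList n x).take i = initialList i x := by
  refine List.ext_getElem (by simpa using h) fun j h₁ h₂ => ?_
  simp [initialList]

lemma drop_initialList (i n : ℕ) (x : ℕ → A) :
    (initialList n x).drop i = initialList (n - i) fun t => x (i + t) := by
  refine List.ext_getElem (by simp) fun j h₁ h₂ => ?_
  simp [initialList]

lemma mem_Comps {k p q : ℕ} {c : Fin k → ℕ × ℕ} :
    c ∈ Comps k p q ↔
      (∑ t, (c t).1) = p ∧ (∑ t, (c t).2) = q ∧ ∀ t, 1 ≤ (c t).1 + (c t).2 := by
  simp only [Comps, mem_filter, Fintype.mem_piFinset, mem_product, mem_range,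
    and_iff_right_iff_imp]
  rintro ⟨h₁, h₂, -⟩ t
  have h₃ := single_le_sum (f := fun t => (c t).1) (fun _ _ => Nat.zero_le _) (mem_univ t)
  have h₄ := single_le_sum (f := fun t => (c t).2) (fun _ _ => Nat.zero_le _) (mem_univ t)
  omega

lemma sum_Comps_succ {B : Type*} [AddCommMonoid B] (k p q : ℕ)
    (φ : (Fin (k + 1) → ℕ × ℕ) → B) :
    ∑ c ∈ Comps (k + 1) p q, φ c
      = ∑ i ∈ range (p + 1), ∑ j ∈ range (q + 1),
          if i = 0 ∧ j = 0 then 0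
          else ∑ c ∈ Comps k (p - i) (q - j), φ (Fin.cons (i, j) c) := by
  rw [← sum_product']
  have hif (ij : ℕ × ℕ) :
      (if ij.1 = 0 ∧ ij.2 = 0 then 0
        else ∑ c ∈ Comps k (p - ij.1) (q - ij.2), φ (Fin.cons (ij.1, ij.2) c))
      = ∑ c ∈ if ij.1 = 0 ∧ ij.2 = 0 then ∅ else Comps k (p - ij.1) (q - ij.2),
          φ (Fin.cons ij c) := by
    split_ifs <;> simp
  simp only [hif]
  rw [sum_sigma']
  symm
  refine sum_bij' (fun s _ => Fin.cons s.1 s.2) (fun c _ => ⟨c 0, Fin.tail c⟩) ?_ ?_ ?_ ?_ ?_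
  · rintro ⟨⟨i, j⟩, c⟩ h
    simp only [mem_sigma, mem_product, mem_range] at h
    obtain ⟨⟨hi, hj⟩, h⟩ := h
    split_ifs at h with h0
    · simp at h
    · rw [mem_Comps] at h
      rw [mem_Comps]
      refine ⟨?_, ?_, ?_⟩
      · simp only [Fin.sum_univ_succ, Fin.cons_zero, Fin.cons_succ, h.1]
        omega
      · simp only [Fin.sum_univ_succ, Fin.cons_zero, Fin.cons_succ, h.2.1]
        omega
      · refine Fin.cases ?_ ?_
        · simp only [Fin.cons_zero]
          omega
        · simpa using h.2.2
  · intro c h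
    rw [mem_Comps] at h
    simp only [Fin.sum_univ_succ] at h
    obtain ⟨h₁, h₂, h₃⟩ := h
    have h₀ := h₃ 0
    simp only [mem_sigma, mem_product, mem_range]
    refine ⟨⟨by omega, by omega⟩, ?_⟩
    rw [if_neg (by omega), mem_Comps]
    exact ⟨by simp only [Fin.tail]; omega, by simp only [Fin.tail]; omega, fun t => h₃ t.succ⟩
  · rintro ⟨ij, c⟩ _
    simp
  · intro c _
    simp
  · intro _ _
    rfl

lemma off1_cons_succ {k : ℕ} (ij : ℕ × ℕ) (c : Fin k → ℕ × ℕ) (t : Fin k) :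
    off1 (Fin.cons ij c : Fin (k + 1) → ℕ × ℕ) t.succ = ij.1 + off1 c t := by
  simp [off1, sum_filter, Fin.sum_univ_succ]

lemma off2_cons_succ {k : ℕ} (ij : ℕ × ℕ) (c : Fin k → ℕ × ℕ) (t : Fin k) :
    off2 (Fin.cons ij c : Fin (k + 1) → ℕ × ℕ) t.succ = ij.2 + off2 c t := by
  simp [off2, sum_filter, Fin.sum_univ_succ]

variable (M : ∀ p q : ℕ, (Fin p → A) → (Fin q → A) → A)

lemma blockVal_cons_zero {k : ℕ} (ij : ℕ × ℕ) (c : Fin k → ℕ × ℕ) (x y : ℕ → A) :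
    blockVal M (Fin.cons ij c : Fin (k + 1) → ℕ × ℕ) x y 0
      = M ij.1 ij.2 (fun s => x s) (fun s => y s) := by
  have h₁ : off1 (Fin.cons ij c : Fin (k + 1) → ℕ × ℕ) 0 = 0 := by simp [off1]
  have h₂ : off2 (Fin.cons ij c : Fin (k + 1) → ℕ × ℕ) 0 = 0 := by simp [off2]
  simp only [blockVal, h₁, h₂, zero_add]
  rfl

lemma blockVal_cons_succ {k : ℕ} (ij : ℕ × ℕ) (c : Fin k → ℕ × ℕ) (x y : ℕ → A) (t : Fin k) :
    blockVal M (Fin.cons ij c : Fin (k + 1) → ℕ × ℕ) x y t.succ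
      = blockVal M c (fun n => x (ij.1 + n)) (fun n => y (ij.2 + n)) t := by
  simp only [blockVal, off1_cons_succ, off2_cons_succ, add_assoc]
  rfl

/-- The operations `M` as a function of two lists. -/
def listOp (u v : List A) : A := M u.length v.length u.get v.get

lemma listOp_ofFn {p q : ℕ} (f : Fin p → A) (g : Fin q → A) :
    listOp M (List.ofFn f) (List.ofFn g) = M p q f g := by
  have key {p' q' : ℕ} (f' : Fin p' → A) (g' : Fin q' → A) (hp : p' = p) (hq : q' = q)
      (hf : ∀ i, f' i = f (Fin.cast hp i)) (hg : ∀ i, g' i = g (Fin.cast hq i)) :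
      M p' q' f' g' = M p q f g := by
    subst hp hq
    rw [show f' = f from funext hf, show g' = g from funext hg]
  exact key _ _ List.length_ofFn List.length_ofFn (fun _ => by simp; rfl) (fun _ => by simp; rfl)

variable [AddCommGroup A]

lemma blockSumLen_listOp (k p q : ℕ) (x y : ℕ → A) (f : List A → A) :
    blockSumLen (listOp M) k (initialList p x) (initialList q y) f
      = ∑ c ∈ Comps k p q, f (List.ofFn (blockVal M c x y)) := by
  induction k generalizing p q x y f with
  | zero =>
    simp only [blockSumLen, initialList_eq_nil]
    split_ifs with h
    · obtain ⟨rfl, rfl⟩ := h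
      rw [show Comps 0 0 0 = univ from eq_univ_of_forall fun c => by simp [mem_Comps]]
      simp
    · rw [show Comps 0 p q = ∅ by ext c; simp [mem_Comps]; omega]
      simp
  | succ k ih =>
    rw [sum_Comps_succ, blockSumLen, splitSum, length_initialList]
    refine sum_congr rfl fun i hi => ?_
    rw [splitSum, length_initialList]
    refine sum_congr rfl fun j hj => ?_
    rw [mem_range] at hi hj
    rw [take_initialList (by omega), take_initialList (by omega), drop_initialList,
      drop_initialList, ih]
    simp only [initialList_eq_nil, List.ofFn_succ, blockVal_cons_zero, blockVal_cons_succ]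
    simp only [initialList, listOp_ofFn]

lemma blockSum_listOp {p q : ℕ} (hp : 1 ≤ p) (x y : ℕ → A) (f : List A → A) :
    blockSum (listOp M) (initialList p x) (initialList q y) f
      = ∑ k ∈ Icc 1 (p + q), ∑ c ∈ Comps k p q, f (List.ofFn (blockVal M c x y)) := by
  simp only [← blockSumLen_listOp]
  rw [blockSum_apply, length_initialList, length_initialList, sum_range_succ', blockSumLen,
    if_neg (by rw [initialList_eq_nil]; omega), add_zero, range_eq_Ico,
    sum_Ico_add' (fun k => blockSumLen (listOp M) k (initialList p x) (initialList q y) f) 0 (p + q) 1]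
  rfl

lemma blockSumLen_one (m : List A → List A → A) {u v : List A} (h : ¬(u = [] ∧ v = []))
    (f : List A → A) : blockSumLen m 1 u v f = f [m u v] := by
  rw [blockSumLen, splitSum_eq_last, splitSum_eq_last]
  · simp [h, blockSumLen]
  · intro v₁ v₂ _ hv
    simp [blockSumLen, hv]
  · intro u₁ u₂ _ hu
    simp [blockSumLen, hu]

lemma omegaIter_eq_omegaList {K : Type*} [Field K] [Module K A] (succ : A →ₗ[K] A →ₗ[K] A)
    (x : ℕ → A) (n : ℕ) :
    omegaIter (fun a b => succ a b) x n = omegaList succ (initialList (n + 1) x) := by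
  have key (n : ℕ) : omegaIter (fun a b => succ a b) x n
      = foldSucc succ (x 0) (initialList n fun t => x (t + 1)) := by
    induction n with
    | zero => simp [omegaIter, foldSucc, initialList]
    | succ n ih =>
      rw [omegaIter, ih]
      rw [initialList, initialList, List.ofFn_succ_last]
      simp [foldSucc]
  rw [key]
  simp [initialList, List.ofFn_succ, omegaList]

end Compositions

end Multibrace

/-- The multibrace operations `M_{pq}` defined recursively from a
dipterous structure `(A, *, ≻)` by
`M_{pq}(x;y) = ω^≻(x) * ω^≻(y) − Σ_{k≥2} Σ ω^≻(M_{i₁j₁}(x¹;y¹), …, M_{i_kj_k}(x^k;y^k))`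
satisfy all the multibrace relations `(R_{ijk})`: every dipterous algebra is naturally a
multibrace algebra. -/
theorem dipterous_to_multibrace (K A : Type*) [Field K] [AddCommGroup A] [Module K A]
    (star succ : A →ₗ[K] A →ₗ[K] A)
    (hstar : ∀ x y z : A, star (star x y) z = star x (star y z))
    (hdipt : ∀ x y z : A, succ (star x y) z = succ x (succ y z))
    (M : ∀ p q : ℕ, (Fin p → A) → (Fin q → A) → A)
    (hM00 : ∀ x y, M 0 0 x y = 0)
    (hM10 : ∀ x y, M 1 0 x y = x 0)
    (hM01 : ∀ x y, M 0 1 x y = y 0)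
    (hMp0 : ∀ p, 2 ≤ p → ∀ x y, M p 0 x y = 0)
    (hM0q : ∀ q, 2 ≤ q → ∀ x y, M 0 q x y = 0)
    (hMrec : ∀ p q : ℕ, 1 ≤ p → 1 ≤ q → ∀ x y : ℕ → A,
      M p q (fun i : Fin p => x i.1) (fun i : Fin q => y i.1)
        = star (omegaIter (fun a b => succ a b) x (p - 1))
            (omegaIter (fun a b => succ a b) y (q - 1))
          - ∑ k ∈ Finset.Icc 2 (p + q), ∑ c ∈ Comps k p q,
              omegaIter (fun a b => succ a b)
                (fun t => if h : t < k then blockVal M c x y ⟨t, h⟩ else 0) (k - 1)) :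
    ∀ i j k : ℕ, 1 ≤ i → 1 ≤ j → 1 ≤ k → ∀ x y z : ℕ → A, Rrel M i j k x y z := by
  have hlist : Multibrace.IsDipterousBrace star succ (Multibrace.listOp M) :=
    { nil_nil := hM00 _ _
      single_nil := fun _ => hM10 _ _
      nil_single := fun _ => hM01 _ _
      long_nil := fun _ _ _ => hMp0 _ (by simp) _ _
      nil_long := fun _ _ _ => hM0q _ (by simp) _ _
      star_omega := by
        intro u v hu hv
        obtain ⟨p, hp⟩ := Nat.exists_eq_succ_of_ne_zero (List.length_pos_iff.2 hu).ne'
        obtain ⟨q, hq⟩ := Nat.exists_eq_succ_of_ne_zero (List.length_pos_iff.2 hv).ne'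
        rw [← Multibrace.initialList_getD u 0, ← Multibrace.initialList_getD v 0, hp, hq]
        generalize (fun n => u.getD n 0) = x
        generalize (fun n => v.getD n 0) = y
        have hrec := hMrec (p + 1) (q + 1) (by omega) (by omega) x y
        simp only [Nat.add_sub_cancel, Multibrace.omegaIter_eq_omegaList] at hrec
        rw [eq_sub_iff_add_eq] at hrec
        rw [Nat.succ_eq_add_one, Nat.succ_eq_add_one, ← hrec,
          Multibrace.blockSum_listOp M (by omega),
          ← Finset.add_sum_Ioc_eq_sum_Icc (by omega : 1 ≤ p + 1 + (q + 1))]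
        congr 1
        · rw [← Multibrace.blockSumLen_listOp, Multibrace.blockSumLen_one _
            (by simp [Multibrace.initialList_eq_nil])]
          exact (Multibrace.listOp_ofFn M _ _).symm
        · refine Finset.sum_congr rfl fun k hk => Finset.sum_congr rfl fun c _ => ?_
          have hk' : k - 1 + 1 = k := by
            have := (Finset.mem_Icc.1 hk).1
            omega
          rw [hk']
          simp [Multibrace.initialList] }
  intro i j k hi hj _ x y z
  have h := hlist.leftBrace_eq_rightBrace hstar (Multibrace.initialList i x)
    (Multibrace.initialList j y) (Multibrace.initialList k z)
  simp only [Multibrace.leftBrace, Multibrace.rightBrace, Multibrace.blockSum_listOp M hi,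
    Multibrace.blockSum_listOp M hj] at h
  simpa only [Rrel, Multibrace.initialList, Multibrace.listOp_ofFn] using h
end

section
/- Let A be a 2-associative algebra over a commutative ring K, i.e., a K-module with two associative K-bilinear products · and *. Define M₁₁(x;y) := x*y − x·y − y·x, M₂₁(x,y;z) := (x·y)*z − x·(y*z) − (x*z)·y + x·z·y, and M₁₂(x;y,z) := x*(y·z) − (x*y)·z − y·(x*z) + y·x·z. Then for all x,y,z ∈ A: M₂₁(x,y;z) + M₂₁(y,x;z) + M₁₁(M₁₁(x;y);z) = M₁₁(x;M₁₁(y;z)) + M₁₂(x;y,z) + M₁₂(x;z,y). -/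
/-- In any 2-associative algebra (two associative bilinear products `·` and
`*`) the induced multibrace operations `M₁₁`, `M₂₁`, `M₁₂` satisfy the first nontrivial
multibrace relation (R₁₁₁). -/
theorem twoAs_R111 (K A : Type*) [CommRing K] [AddCommGroup A] [Module K A]
    (dot star : A →ₗ[K] A →ₗ[K] A)
    (hdot : ∀ x y z : A, dot (dot x y) z = dot x (dot y z))
    (hstar : ∀ x y z : A, star (star x y) z = star x (star y z)) :
    ∀ x y z : A,
      let M11 : A → A → A := fun a b => star a b - dot a b - dot b a
      let M21 : A → A → A → A := fun a b c =>
        star (dot a b) c - dot a (star b c) - dot (star a c) b + dot (dot a c) b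
      let M12 : A → A → A → A := fun a b c =>
        star a (dot b c) - dot (star a b) c - dot b (star a c) + dot (dot b a) c
      M21 x y z + M21 y x z + M11 (M11 x y) z
        = M11 x (M11 y z) + M12 x y z + M12 x z y := by
  intro x y z
  simp only [map_sub, LinearMap.sub_apply, hdot, hstar]
  abel
end

section
/- Let K be a field of characteristic zero and let F = ⊕_{n≥1} K·x_n be the free K-module on a basis (x_n)_{n≥1}, equipped with the K-bilinear operation {x_p, x_q} := −p·x_{p+q}. Then F is generated as a pre-Lie algebra by the single element x₁: the smallest K-submodule S ⊆ F with x₁ ∈ S and {S,S} ⊆ S is F itself. -/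
/-- Over a field of characteristic zero, the Faà di Bruno pre-Lie algebra
`F = ⊕_{n≥1} K·x_n` with `{x_p, x_q} := -p·x_{p+q}` is generated as a pre-Lie algebra by
`x₁`: any submodule containing `x₁` and closed under the bracket is everything. -/
theorem faaDiBruno_generated_by_x1 (K : Type*) [Field K] [CharZero K]
    (br : (ℕ+ →₀ K) →ₗ[K] (ℕ+ →₀ K) →ₗ[K] (ℕ+ →₀ K))
    (hbr : ∀ p q : ℕ+,
      br (Finsupp.single p 1) (Finsupp.single q 1)
        = Finsupp.single (p + q) (-((p : ℕ) : K))) :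
    ∀ S : Submodule K (ℕ+ →₀ K),
      Finsupp.single 1 1 ∈ S →
      (∀ a b : ℕ+ →₀ K, a ∈ S → b ∈ S → br a b ∈ S) →
      S = ⊤ := by
  intro S h1 hS
  have hsingle : ∀ n : ℕ+, Finsupp.single n (1 : K) ∈ S := by
    intro n
    induction n using PNat.recOn with
    | one => exact h1
    | succ n ih =>
      have hn : -((n : ℕ) : K) ≠ 0 := neg_ne_zero.mpr (Nat.cast_ne_zero.mpr n.ne_zero)
      have hmem := S.smul_mem (-((n : ℕ) : K))⁻¹ (hS _ _ ih h1)
      rwa [hbr, Finsupp.smul_single, smul_eq_mul, inv_mul_cancel₀ hn] at hmem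
  rw [eq_top_iff, ← Finsupp.basisSingleOne.span_eq, Submodule.span_le]
  rintro _ ⟨n, rfl⟩
  simpa using hsingle n
end

section
/- Let K be a field, R a K-module, and M_{pq} : R^{⊗p} ⊗ R^{⊗q} → R (p,q ≥ 0) a family of K-multilinear operations with M_{00} = 0, M_{10} = M_{01} = id_R, and M_{p0} = 0 = M_{0q} for p,q ≥ 2, satisfying all the multibrace relations (R_{ijk}) for i,j,k ≥ 1, and let * be the induced associative unital product on the tensor module T(R) = ⊕_{n≥0} R^{⊗n}, given for p,q ≥ 1 by (x₁⊗…⊗x_p) * (y₁⊗…⊗y_q) = Σ_{k=1}^{p+q} Σ M_{i₁j₁}(x¹;y¹) ⊗ … ⊗ M_{i_kj_k}(x^k;y^k), the inner sum over sequences (i₁,…,i_k), (j₁,…,j_k) of nonnegative integers with i₁+…+i_k = p, j₁+…+j_k = q and i_t + j_t ≥ 1, with consecutive blocks x^t, y^t. Then the following are equivalent: (a) for every q ≥ 1 the subspace ⊕_{n≥q} R^{⊗n} is a right ideal of (T(R), *); (b) M_{pq} = 0 for all p ≥ 2 and all q ≥ 1. -/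
open Finset

section

variable (K : Type*) [Field K] (V : Type*) [AddCommGroup V] [Module K V]

/-- Extend a finite family of vectors by zero to a sequence. -/
def extendZero {V : Type*} [Zero V] {p : ℕ} (x : Fin p → V) (n : ℕ) : V :=
  if h : n < p then x ⟨n, h⟩ else 0

theorem extendZero_val {V : Type*} [Zero V] {p : ℕ} (x : Fin p → V) (i : Fin p) :
    extendZero x i.1 = x i := by
  simp [extendZero]

theorem el_extendZero {p : ℕ} (x : Fin p → V) :
    el K V p (extendZero x) = DirectSum.of (fun n => TensorPower K n V) p
      (PiTensorProduct.tprod K x) := by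
  simp only [el, extendZero_val]

theorem unitEl_eq_of_tprod (x : Fin 0 → V) :
    unitEl K V = DirectSum.of (fun n => TensorPower K n V) 0 (PiTensorProduct.tprod K x) := by
  rw [unitEl]
  congr 2
  exact Subsingleton.elim _ _

/-- The component in degree `n ≥ 1` of a sum of homogeneous tensors indexed by their degree. -/
theorem sum_of_apply (N : ℕ) {ι : ℕ → Type*} (s : ∀ k, Finset (ι k))
    (f : ∀ k, ι k → TensorPower K k V) {n : ℕ} (hn : n ∈ Finset.Icc 1 N) :
    (∑ k ∈ Finset.Icc 1 N, ∑ c ∈ s k, DirectSum.of (fun n => TensorPower K n V) k (f k c)) n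
      = ∑ c ∈ s n, f n c := by
  simp only [← map_sum]
  rw [DFinsupp.finsetSum_apply, Finset.sum_eq_single_of_mem n hn]
  · exact DirectSum.of_eq_same _ _
  · intro k _ hk
    exact DirectSum.of_eq_of_ne _ _ _ hk.symm

theorem Comps_one {p q : ℕ} (h : 1 ≤ p + q) : Comps 1 p q = {fun _ => (p, q)} := by
  ext c
  simp only [Comps, Finset.mem_filter, Fintype.mem_piFinset, Finset.mem_product, Finset.mem_range,
    Fin.forall_fin_one, Fin.sum_univ_one, Finset.mem_singleton, funext_iff, Prod.ext_iff]
  omega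

theorem exists_two_le_of_mem_Comps {k p q : ℕ} {c : Fin k → ℕ × ℕ} (hc : c ∈ Comps k p q)
    (hkp : k < p) : ∃ t, 2 ≤ (c t).1 := by
  by_contra! h
  have hsum : ∑ t, (c t).1 = p := (Finset.mem_filter.mp hc).2.1
  have hle : ∑ t, (c t).1 ≤ ∑ _t : Fin k, 1 :=
    Finset.sum_le_sum fun t _ => Nat.le_of_lt_succ (h t)
  simp at hle
  omega

theorem tprod_const_eq_zero_iff (v : V) :
    PiTensorProduct.tprod K (fun _ : Fin 1 => v) = 0 ↔ v = 0 := by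
  rw [← (PiTensorProduct.subsingletonEquiv (0 : Fin 1)).map_eq_zero_iff (M := TensorPower K 1 V)]
  simp

/-- If the degree `n` component of a bilinear map vanishes on pure tensors whose first argument has
degree at least `Q`, then it vanishes whenever the first argument is concentrated in degrees at
least `Q`. -/
theorem apply_eq_zero_of_forall_tprod
    (f : TensorModule K V →ₗ[K] TensorModule K V →ₗ[K] TensorModule K V) {Q n : ℕ}
    (hf : ∀ p q, Q ≤ p → ∀ (x : Fin p → V) (y : Fin q → V),
      f (DirectSum.of (fun n => TensorPower K n V) p (PiTensorProduct.tprod K x))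
        (DirectSum.of (fun n => TensorPower K n V) q (PiTensorProduct.tprod K y)) n = 0)
    (a b : TensorModule K V) (ha : ∀ m, m < Q → a m = 0) : f a b n = 0 := by
  classical
  let g : TensorModule K V →ₗ[K] TensorModule K V →ₗ[K] TensorPower K n V :=
    f.compr₂ (DirectSum.component K ℕ (fun n => TensorPower K n V) n)
  have hg : ∀ p, Q ≤ p → g ∘ₗ DirectSum.lof K ℕ (fun n => TensorPower K n V) p = 0 := by
    intro p hp
    ext x q y
    exact hf p q hp x y
  change g a b = 0
  rw [← DirectSum.sum_support_of a, map_sum, LinearMap.sum_apply]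
  refine Finset.sum_eq_zero fun p _ => ?_
  rcases lt_or_ge p Q with hp | hp
  · simp [ha p hp]
  · exact LinearMap.congr_fun (LinearMap.congr_fun (hg p hp) (a p)) b

/-- Let `M_{pq}` be a multibrace structure on `V` (boundary conditions
plus all relations `(R_{ijk})`), and let `*` be the induced associative unital product on
the tensor module `T(V)`. Then `⊕_{n≥q} V^{⊗n}` is a right ideal of `(T(V), *)` for every
`q ≥ 1` if and only if `M_{pq} = 0` for all `p ≥ 2` and `q ≥ 1`. -/
theorem rightSided_iff_Mpq_vanish
    (M : ∀ p q : ℕ, MultilinearMap K (fun _ : Fin p => V)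
      (MultilinearMap K (fun _ : Fin q => V) V))
    (hM00 : M 0 0 = 0)
    (hM10 : ∀ (x : Fin 1 → V) (y : Fin 0 → V), M 1 0 x y = x 0)
    (hM01 : ∀ (x : Fin 0 → V) (y : Fin 1 → V), M 0 1 x y = y 0)
    (hMp0 : ∀ p, 2 ≤ p → M p 0 = 0)
    (hM0q : ∀ q, 2 ≤ q → M 0 q = 0)
    (hR : ∀ i j k : ℕ, 1 ≤ i → 1 ≤ j → 1 ≤ k → ∀ x y z : ℕ → V, RrelM K V M i j k x y z)
    (star : TensorModule K V →ₗ[K] TensorModule K V →ₗ[K] TensorModule K V)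
    (hassoc : ∀ a b c : TensorModule K V, star (star a b) c = star a (star b c))
    (hunit_left : ∀ a : TensorModule K V, star (unitEl K V) a = a)
    (hunit_right : ∀ a : TensorModule K V, star a (unitEl K V) = a)
    (hform : ∀ p q : ℕ, 1 ≤ p → 1 ≤ q → ∀ x y : ℕ → V,
      star (el K V p x) (el K V q y)
        = ∑ k ∈ Finset.Icc 1 (p + q), ∑ c ∈ Comps k p q,
            DirectSum.of (fun n => TensorPower K n V) k
              (PiTensorProduct.tprod K fun t : Fin k => blockValM K V M c x y t)) :
    (∀ Q : ℕ, 1 ≤ Q → ∀ a b : TensorModule K V,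
        (∀ n, n < Q → a n = 0) → ∀ n, n < Q → (star a b) n = 0)
    ↔ (∀ p q : ℕ, 2 ≤ p → 1 ≤ q → M p q = 0) := by
  constructor
  · intro h p q hp hq
    ext x y
    have h0 := h 2 one_le_two (el K V p (extendZero x)) (el K V q (extendZero y))
      (fun n hn => DirectSum.of_eq_of_ne _ _ _ (by omega)) 1 one_lt_two
    rw [hform p q (by omega) hq, sum_of_apply K V _ _ _ (Finset.mem_Icc.mpr ⟨le_rfl, by omega⟩),
      Comps_one (by omega), Finset.sum_singleton] at h0
    have hblock : blockValM K V M (fun _ : Fin 1 => (p, q)) (extendZero x) (extendZero y)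
        = fun _ => M p q x y := by
      funext t
      simp [blockValM, off1, off2, Subsingleton.elim _ t, extendZero_val]
    rw [hblock, tprod_const_eq_zero_iff] at h0
    simpa using h0
  · intro h Q hQ a b ha n hn
    refine apply_eq_zero_of_forall_tprod K V star (fun p q hp x y => ?_) a b ha
    rcases Nat.eq_zero_or_pos q with rfl | hq
    · rw [← unitEl_eq_of_tprod, hunit_right]
      exact DirectSum.of_eq_of_ne _ _ _ (by omega)
    rw [← el_extendZero, ← el_extendZero, hform p q (by omega) hq]
    rcases Nat.eq_zero_or_pos n with rfl | hn0
    · simp only [← map_sum]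
      rw [DFinsupp.finsetSum_apply]
      refine Finset.sum_eq_zero fun k hk => ?_
      exact DirectSum.of_eq_of_ne _ _ _ (by have := (Finset.mem_Icc.mp hk).1; omega)
    rw [sum_of_apply K V _ _ _ (Finset.mem_Icc.mpr ⟨hn0, by omega⟩)]
    refine Finset.sum_eq_zero fun c hc => ?_
    obtain ⟨t, ht⟩ := exists_two_le_of_mem_Comps hc (by omega)
    refine (PiTensorProduct.tprod K).map_coord_zero t ?_
    have hM : M (c t).1 (c t).2 = 0 := by
      rcases Nat.eq_zero_or_pos (c t).2 with h2 | h2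
      · rw [h2, hMp0 _ ht]
      · exact h _ _ ht h2
    simp [blockValM, hM]

end
end

section
/- Let K be a commutative ring and A a K-module equipped with two K-bilinear operations ≺ and ≻; set x*y := x≺y + x≻y. Then the following are equivalent: (i) (A, *, ≻) is a dipterous algebra satisfying the additional relation (x≻y)≺z = x≻(y≺z), i.e., (x*y)*z = x*(y*z), (x*y)≻z = x≻(y≻z) and (x≻y)≺z = x≻(y≺z) hold for all x,y,z; (ii) (A, ≺, ≻) is a dendriform algebra, i.e., (x≺y)≺z = x≺(y*z), (x≻y)≺z = x≻(y≺z) and (x*y)≻z = x≻(y≻z) hold for all x,y,z. -/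
/-- For a module with two bilinear operations `≺`, `≻` and
`x * y := x ≺ y + x ≻ y`, being a dipterous algebra satisfying the extra relation
`(x≻y)≺z = x≻(y≺z)` is equivalent to being a dendriform algebra. -/
theorem dipterous_with_middle_iff_dendriform (K A : Type*) [CommRing K]
    [AddCommGroup A] [Module K A]
    (prec succ : A →ₗ[K] A →ₗ[K] A) :
    ((∀ x y z : A,
        (prec (prec x y + succ x y) z + succ (prec x y + succ x y) z)
          = prec x (prec y z + succ y z) + succ x (prec y z + succ y z)) ∧
     (∀ x y z : A, succ (prec x y + succ x y) z = succ x (succ y z)) ∧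
     (∀ x y z : A, prec (succ x y) z = succ x (prec y z)))
    ↔
    ((∀ x y z : A, prec (prec x y) z = prec x (prec y z + succ y z)) ∧
     (∀ x y z : A, prec (succ x y) z = succ x (prec y z)) ∧
     (∀ x y z : A, succ (prec x y + succ x y) z = succ x (succ y z))) := by
  constructor
  · rintro ⟨assoc, hsucc, hmid⟩
    refine ⟨fun x y z => ?_, hmid, hsucc⟩
    have h := assoc x y z
    rwa [hsucc, map_add prec (prec x y), LinearMap.add_apply, hmid,
      map_add (succ x), add_assoc, add_left_inj] at h
  · rintro ⟨hprec, hmid, hsucc⟩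
    refine ⟨fun x y z => ?_, hsucc, hmid⟩
    rw [hsucc, map_add prec (prec x y), LinearMap.add_apply, hmid, hprec,
      map_add (succ x), add_assoc]
end
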